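/- arXiv:2310.16674 — 10 statements merged into one kernel-verified Lean document; each statement's English description precedes it below -/
import Mathlib

section
/- Let m, n ∈ ℕ and α ∈ ℝ. For every x ∈ ℝ, lim_{β→∞} β^{n+m} P̂^{(I,m)}_n(1 − 2x/β; α, β) = (−2)^{n+m} L̂^{(I,m)}_n(x; α), the limit being taken along real β → +∞ (for all sufficiently large β all occurring polynomials are defined). -/
open Finset Filter Topology

/-- Monic Laguerre polynomial `L_n^{(α)}(x)`. -/
noncomputable def lagP (n : ℕ) (α x : ℝ) : ℝ :=
  ∑ k ∈ Finset.range (n + 1),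
    (-1 : ℝ) ^ (n - k) * ((n.factorial : ℝ) / (k.factorial : ℝ)) *
      ((∏ j ∈ Finset.Icc (k + 1) n, (α + (j : ℝ))) / ((n - k).factorial : ℝ)) * x ^ k

/-- Pochhammer symbol `(a)_n = a (a+1) ⋯ (a+n−1)`. -/
noncomputable def poch (a : ℝ) (n : ℕ) : ℝ := ∏ j ∈ Finset.range n, (a + (j : ℝ))

/-- Monic Jacobi polynomial `P_n^{(α,β)}(x)`. -/
noncomputable def jacP (n : ℕ) (α β x : ℝ) : ℝ :=
  (2 ^ n * (n.factorial : ℝ) / poch ((n : ℝ) + α + β + 1) n) *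
    ∑ s ∈ Finset.range (n + 1),
      ((∏ j ∈ Finset.Icc (s + 1) n, (α + (j : ℝ))) / ((n - s).factorial : ℝ)) *
        ((∏ j ∈ Finset.Icc (n - s + 1) n, (β + (j : ℝ))) / (s.factorial : ℝ)) *
        ((x - 1) / 2) ^ s * ((x + 1) / 2) ^ (n - s)

/-- Monic Hermite polynomial, as a polynomial function on `ℂ`. -/
noncomputable def hermC (n : ℕ) (z : ℂ) : ℂ :=
  ∑ k ∈ Finset.range (n / 2 + 1),
    (-1 : ℂ) ^ k *
      ((n.factorial : ℂ) / ((k.factorial : ℂ) * ((n - 2 * k).factorial : ℂ) * 4 ^ k)) *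
      z ^ (n - 2 * k)

/-- Type I `X_m`-Laguerre exceptional orthogonal polynomial `L̂^{(I,m)}_n(x;α)`. -/
noncomputable def lagI (m n : ℕ) (α x : ℝ) : ℝ :=
  (-1 : ℝ) ^ m * (lagP m (α + 1) (-x) * lagP n α x
    - (n : ℝ) * lagP m α (-x) * lagP (n - 1) (α + 1) x)

/-- Type II `X_m`-Laguerre exceptional orthogonal polynomial `L̂^{(II,m)}_n(x;α)`. -/
noncomputable def lagII (m n : ℕ) (α x : ℝ) : ℝ :=
  (1 / (α + (n : ℝ) - (m : ℝ))) *
    ((n : ℝ) * x * lagP m (-α) x * lagP (n - 1) (α + 1) x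
      - ((m : ℝ) - α) * lagP m (-α - 1) x * lagP n α x)

/-- Type III `X_m`-Laguerre exceptional orthogonal polynomial `L̂^{(III,m)}_n(x;α)`. -/
noncomputable def lagIII (m n : ℕ) (α x : ℝ) : ℝ :=
  if n = 0 then 1 else
    (-1 : ℝ) ^ m * (lagP m (-α) (-x) * lagP (n - m) (α - 1) x
      - (m : ℝ) * x * lagP (m - 1) (-α + 1) (-x) * lagP (n - m - 1) α x)

/-- Type I `X_m`-Jacobi exceptional orthogonal polynomial `P̂^{(I,m)}_n(x;α,β)`. -/
noncomputable def jacI (m n : ℕ) (α β x : ℝ) : ℝ :=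
  (1 / (β + (n : ℝ) - (m : ℝ))) *
    (jacP m α (-β) x * ((n : ℝ) * (1 + x) * jacP (n - 1) (α + 1) (β + 1) x
        + β * jacP n α β x)
      - (m : ℝ) * (1 + x) * jacP (m - 1) (α + 1) (-β + 1) x * jacP n α β x)

/-- Type II `X_m`-Jacobi exceptional orthogonal polynomial `P̂^{(II,m)}_n(x;α,β)`. -/
noncomputable def jacII (m n : ℕ) (α β x : ℝ) : ℝ :=
  (1 / ((m : ℝ) - (n : ℝ) - α)) *
    (jacP m (-α) β x * ((n : ℝ) * (1 - x) * jacP (n - 1) (α + 1) (β + 1) x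
        - α * jacP n α β x)
      - (m : ℝ) * (1 - x) * jacP (m - 1) (-α + 1) (β + 1) x * jacP n α β x)

/-- Type III `X_m`-Jacobi exceptional orthogonal polynomial `P̂^{(III,m)}_n(x;α,β)`. -/
noncomputable def jacIII (m n : ℕ) (α β x : ℝ) : ℝ :=
  if n = 0 then 1 else
    (1 / (α + β + (n : ℝ) - 2 * (m : ℝ) - 1)) *
      ((α + β + (n : ℝ) - (m : ℝ) - 1) * jacP m (-α) (-β) x * jacP (n - m) (α - 1) (β - 1) x
        + (m : ℝ) * (1 - x ^ 2) * jacP (m - 1) (-α + 1) (-β + 1) x * jacP (n - m - 1) α β x)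

/-- Type III `X_m`-Hermite exceptional orthogonal polynomial `Ĥ^{(III,m)}_n(x)`
(a real polynomial, expressed via complex Hermite values). -/
noncomputable def hermIII (m n : ℕ) (x : ℝ) : ℂ :=
  if n = 0 then 1 else
    Complex.I ^ m * (hermC m (Complex.I * x) * hermC (n - m) (x : ℂ)
      + Complex.I * ((m : ℂ) / 2) * hermC (m - 1) (Complex.I * x) * hermC (n - m - 1) (x : ℂ))

lemma aux_lag (N : ℕ) (α y : ℝ) :
    lagP (N + 1) (α + 1) y = lagP (N + 1) α y - ((N + 1 : ℕ) : ℝ) * lagP N (α + 1) y := by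
  unfold lagP
  rw [Finset.sum_range_succ _ (N + 1), Finset.sum_range_succ _ (N + 1), Finset.mul_sum]
  have h : ∀ k ∈ Finset.range (N + 1),
      (-1 : ℝ) ^ (N + 1 - k) * (((N + 1).factorial : ℝ) / (k.factorial : ℝ)) *
      ((∏ j ∈ Finset.Icc (k + 1) (N + 1), (α + 1 + (j : ℝ))) / ((N + 1 - k).factorial : ℝ)) * y ^ k
      = (-1 : ℝ) ^ (N + 1 - k) * (((N + 1).factorial : ℝ) / (k.factorial : ℝ)) *
      ((∏ j ∈ Finset.Icc (k + 1) (N + 1), (α + (j : ℝ))) / ((N + 1 - k).factorial : ℝ)) * y ^ k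
      - ((N + 1 : ℕ) : ℝ) * ((-1 : ℝ) ^ (N - k) * ((N.factorial : ℝ) / (k.factorial : ℝ)) *
      ((∏ j ∈ Finset.Icc (k + 1) N, (α + 1 + (j : ℝ))) / ((N - k).factorial : ℝ)) * y ^ k) := by
    intro k hk
    have hkN : k ≤ N := by simpa [Nat.lt_succ_iff] using hk
    obtain ⟨d, rfl⟩ := Nat.exists_eq_add_of_le hkN
    have e1 : k + d + 1 - k = d + 1 := by omega
    have e2 : k + d - k = d := by omega
    rw [e1, e2]
    have p1 : ∏ j ∈ Finset.Icc (k + 1) (k + d + 1), (α + 1 + (j : ℝ))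
        = (∏ j ∈ Finset.Icc (k + 1) (k + d), (α + 1 + (j : ℝ))) * (α + 1 + ((k + d + 1 : ℕ) : ℝ)) :=
      Finset.prod_Icc_succ_top (by omega) _
    have p2 : ∏ j ∈ Finset.Icc (k + 1) (k + d + 1), (α + (j : ℝ))
        = (α + ((k + 1 : ℕ) : ℝ)) * ∏ j ∈ Finset.Icc (k + 1) (k + d), (α + 1 + (j : ℝ)) := by
      rw [← Finset.Ico_succ_right_eq_Icc, ← Finset.Ico_succ_right_eq_Icc]
      simp only [Nat.succ_eq_succ, Nat.succ_eq_add_one]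
      rw [Finset.prod_eq_prod_Ico_succ_bot (by omega), ← Finset.prod_Ico_add' _ (k+1) (k+d+1) 1]
      congr 1
      apply Finset.prod_congr rfl
      intro j _
      push_cast
      ring
    rw [p1, p2, Nat.factorial_succ, Nat.factorial_succ]
    generalize (∏ j ∈ Finset.Icc (k + 1) (k + d), (α + 1 + (j : ℝ))) = Q
    have h1 : (d.factorial : ℝ) ≠ 0 := by positivity
    have h2 : (k.factorial : ℝ) ≠ 0 := by positivity
    have h3 : (d : ℝ) + 1 ≠ 0 := by positivity
    push_cast
    field_simp
    ring
  rw [Finset.sum_congr rfl h, Finset.sum_sub_distrib]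
  simp
  ring

lemma aux_lag' (m : ℕ) (α y : ℝ) :
    lagP m (α + 1) y = lagP m α y - (m : ℝ) * lagP (m - 1) (α + 1) y := by
  cases m with
  | zero => simp [lagP]
  | succ N => exact aux_lag N α y

lemma aux_lin (ε c : ℝ) : Tendsto (fun β : ℝ => (ε * β + c) / β) atTop (𝓝 ε) := by
  have h : Tendsto (fun β : ℝ => ε + c * β⁻¹) atTop (𝓝 (ε + c * 0)) :=
    tendsto_const_nhds.add (tendsto_inv_atTop_zero.const_mul c)
  rw [mul_zero, add_zero] at h
  refine h.congr' ?_
  filter_upwards [eventually_gt_atTop 0] with β hβ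
  field_simp

lemma aux_prod (ε : ℝ) (S : Finset ℕ) (c : ℕ → ℝ) :
    Tendsto (fun β : ℝ => (∏ j ∈ S, (ε * β + c j)) / β ^ S.card) atTop (𝓝 (ε ^ S.card)) := by
  have h := tendsto_finsetProd (f := fun j (β : ℝ) => (ε * β + c j) / β) (a := fun _ => ε) S
    (fun j _ => aux_lin ε (c j))
  simpa [Finset.prod_div_distrib] using h

lemma aux_jac (n : ℕ) (α ε c x : ℝ) (hε : ε * ε = 1) :
    Tendsto (fun β : ℝ => β ^ n * jacP n α (ε * β + c) (1 - 2 * x / β)) atTop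
      (𝓝 ((-2 * ε) ^ n * lagP n α (ε * x))) := by
  have hε0 : ε ≠ 0 := by rintro rfl; simp at hε
  have hp := aux_prod ε (Finset.range n) (fun j => (n : ℝ) + α + c + 1 + j)
  rw [Finset.card_range] at hp
  have hp' := (hp.inv₀ (pow_ne_zero n hε0)).const_mul (2 ^ n * (n.factorial : ℝ))
  have hx : Tendsto (fun β : ℝ => 1 - x / β) atTop (𝓝 1) := by
    simpa [div_eq_mul_inv] using (tendsto_const_nhds (x := (1:ℝ))).sub ((tendsto_inv_atTop_zero (𝕜 := ℝ)).const_mul x)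
  have hs : Tendsto (fun β : ℝ => ∑ s ∈ Finset.range (n + 1),
      ((∏ j ∈ Finset.Icc (s + 1) n, (α + (j : ℝ))) / ((n - s).factorial : ℝ)) *
      ((∏ j ∈ Finset.Icc (n - s + 1) n, (ε * β + (c + (j : ℝ)))) / β ^ (Finset.Icc (n - s + 1) n).card
        * (1 / (s.factorial : ℝ))) * (-x) ^ s * (1 - x / β) ^ (n - s)) atTop
      (𝓝 (∑ s ∈ Finset.range (n + 1),
      ((∏ j ∈ Finset.Icc (s + 1) n, (α + (j : ℝ))) / ((n - s).factorial : ℝ)) *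
      (ε ^ (Finset.Icc (n - s + 1) n).card * (1 / (s.factorial : ℝ))) * (-x) ^ s * 1 ^ (n - s))) := by
    refine tendsto_finsetSum _ fun s _ => ?_
    exact ((((aux_prod ε _ (fun j => c + (j : ℝ))).mul_const _).const_mul _).mul_const _).mul
      (hx.pow _)
  have key := hp'.mul hs
  have hcard : ∀ s ∈ Finset.range (n + 1), (Finset.Icc (n - s + 1) n).card = s := by
    intro s hs
    have := Finset.mem_range.1 hs
    rw [Nat.card_Icc]; omega
  have e : (2 ^ n * (n.factorial : ℝ) * (ε ^ n)⁻¹) * (∑ s ∈ Finset.range (n + 1),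
      ((∏ j ∈ Finset.Icc (s + 1) n, (α + (j : ℝ))) / ((n - s).factorial : ℝ)) *
      (ε ^ (Finset.Icc (n - s + 1) n).card * (1 / (s.factorial : ℝ))) * (-x) ^ s * 1 ^ (n - s))
      = (-2 * ε) ^ n * lagP n α (ε * x) := by
    have hi : (ε ^ n)⁻¹ = ε ^ n := by
      rw [← inv_pow]; congr 1; field_simp; linarith
    rw [hi, lagP, Finset.mul_sum, Finset.mul_sum]
    refine Finset.sum_congr rfl fun s hs => ?_
    rw [hcard s hs]
    obtain ⟨d, rfl⟩ := Nat.exists_eq_add_of_le (Nat.lt_succ_iff.1 (Finset.mem_range.1 hs))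
    have e2 : s + d - s = d := by omega
    have e3 : (-1 : ℝ) ^ d * (-1) ^ d = 1 := by rw [← mul_pow]; simp
    rw [e2, one_pow, mul_pow, mul_pow, neg_pow x, neg_pow (2 : ℝ), pow_add (-1 : ℝ)]
    linear_combination (-(2:ℝ)^(s+d) * ((s+d).factorial : ℝ) * ε ^ (s+d) * ε ^ s * x ^ s * (-1) ^ s *
      ((∏ j ∈ Finset.Icc (s + 1) (s + d), (α + (j : ℝ))) / (d.factorial : ℝ)) / (s.factorial : ℝ)) * e3
  rw [e] at key
  refine key.congr' ?_
  filter_upwards [eventually_gt_atTop 0] with β hβ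
  unfold jacP poch
  have g1 : ∏ j ∈ Finset.range n, ((n : ℝ) + α + (ε * β + c) + 1 + (j : ℝ))
      = ∏ j ∈ Finset.range n, (ε * β + ((n : ℝ) + α + c + 1 + j)) :=
    Finset.prod_congr rfl fun j _ => by ring
  rw [g1, inv_div]
  have g2 : ∀ A S T : ℝ, S = T → 2 ^ n * (n.factorial : ℝ) * (β ^ n / A) * S
      = β ^ n * (2 ^ n * (n.factorial : ℝ) / A * T) := by
    rintro A S _ rfl; ring
  apply g2
  refine Finset.sum_congr rfl fun s hs => ?_
  rw [hcard s hs]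
  have g3 : (1 - 2 * x / β - 1) / 2 = -x / β := by ring
  have g4 : (1 - 2 * x / β + 1) / 2 = 1 - x / β := by ring
  rw [g3, g4, div_pow]
  simp only [add_assoc]
  ring

theorem stmt0 (m n : ℕ) (α x : ℝ) :
    Filter.Tendsto (fun β : ℝ => β ^ (n + m) * jacI m n α β (1 - 2 * x / β)) Filter.atTop
      (nhds ((-2 : ℝ) ^ (n + m) * lagI m n α x)) := by
  have h1 := aux_jac m α (-1) 0 x (by norm_num)
  have h2 := aux_jac n α 1 0 x (by norm_num)
  have h3 := aux_jac (n - 1) (α + 1) 1 1 x (by norm_num)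
  have h4 := aux_jac (m - 1) (α + 1) (-1) 1 x (by norm_num)
  have hx : Tendsto (fun β : ℝ => 1 + (1 - 2 * x / β)) atTop (𝓝 2) := by
    have := (tendsto_const_nhds (x := (2:ℝ))).sub
      ((tendsto_inv_atTop_zero (𝕜 := ℝ)).const_mul (2 * x))
    simp only [mul_zero, sub_zero] at this
    refine this.congr fun β => ?_
    ring
  have hb := (aux_lin 1 ((n : ℝ) - m)).inv₀ one_ne_zero
  have key := hb.mul ((h1.mul (((hx.const_mul (n : ℝ)).mul h3).add h2)).sub
    (((hx.const_mul (m : ℝ)).mul h4).mul h2))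
  have pw : ∀ (k : ℕ) (a : ℝ), (k : ℝ) * a ^ k = (k : ℝ) * (a * a ^ (k - 1)) := by
    intro k a
    cases k with
    | zero => simp
    | succ k => rw [Nat.add_sub_cancel, pow_succ']
  convert key.congr' ?_ using 2
  · unfold lagI
    rw [aux_lag' m α (-x)]
    have q1 := pw n (-2)
    have q2 := pw m 2
    have q3 : (-2 : ℝ) ^ m * (-1) ^ m = 2 ^ m := by rw [← mul_pow]; norm_num
    have q4 : (-2 : ℝ) * -1 = 2 := by norm_num
    rw [q4]
    simp only [neg_one_mul, one_mul, mul_one, inv_one]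
    rw [pow_add]
    generalize lagP m α (-x) = A at *
    generalize lagP (m - 1) (α + 1) (-x) = B at *
    generalize lagP n α x = C at *
    generalize lagP (n - 1) (α + 1) x = D at *
    linear_combination (-2 : ℝ) ^ n * ((A - m * B) * C - n * A * D) * q3
      - 2 ^ m * A * D * q1 - (-2 : ℝ) ^ n * B * C * q2
  · filter_upwards [eventually_gt_atTop 0] with β hβ
    unfold jacI
    have r1 := pw n β
    have r2 := pw m β
    have s1 : -1 * β + 0 = -β := by ring
    have s2 : 1 * β + 0 = β := by ring
    have s3 : 1 * β + 1 = β + 1 := by ring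
    have s4 : -1 * β + 1 = -β + 1 := by ring
    have s5 : 1 * β + ((n : ℝ) - m) = β + n - m := by ring
    rw [s1, s2, s3, s4, s5, inv_div, pow_add]
    generalize jacP m α (-β) _ = A
    generalize jacP (m - 1) (α + 1) _ _ = B
    generalize jacP n α _ _ = C
    generalize jacP (n - 1) (α + 1) _ _ = D
    generalize 1 + (1 - 2 * x / β) = X
    rw [div_eq_mul_inv, one_div]
    generalize (β + (n : ℝ) - m)⁻¹ = E
    linear_combination -E * β ^ m * A * X * D * r1 + E * X * B * C * β ^ n * r2
end

section
/- Let m, n ∈ ℕ and α ∈ ℝ with α + n − m ≠ 0. For every x ∈ ℝ, lim_{β→∞} β^{n+m} P̂^{(II,m)}_n(1 − 2x/β; α, β) = (−2)^{n+m} L̂^{(II,m)}_n(x; α), the limit being taken along real β → +∞ (for all sufficiently large β all occurring polynomials are defined). -/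
open Finset Filter Topology

lemma prod_aux1 (a : ℝ) (k m : ℕ) (hk : k ≤ m) :
    (a + k) * ∏ j ∈ Finset.Icc (k + 1) m, (a + (j : ℝ)) =
      (m + a) * ∏ j ∈ Finset.Icc (k + 1) m, (a - 1 + (j : ℝ)) := by
  induction m, hk using Nat.le_induction with
  | base => simp; ring
  | succ m hm ih =>
    rw [Finset.prod_Icc_succ_top (by omega), Finset.prod_Icc_succ_top (by omega), ← mul_assoc, ih]
    push_cast
    ring

lemma prod_aux2 (a : ℝ) (k m : ℕ) (hk : k ≤ m) :
    ∏ j ∈ Finset.Icc (k + 1) m, (a + 1 + (j : ℝ)) =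
      ∏ j ∈ Finset.Icc (k + 2) (m + 1), (a + (j : ℝ)) := by
  induction m, hk using Nat.le_induction with
  | base => simp
  | succ m hm ih =>
    rw [Finset.prod_Icc_succ_top (by omega), Finset.prod_Icc_succ_top (by omega), ih]
    push_cast
    ring

lemma lag_identity (m : ℕ) (a x : ℝ) :
    a * lagP m a x + m * x * lagP (m - 1) (a + 1) x = (m + a) * lagP m (a - 1) x := by
  rcases m with _ | m
  · simp [lagP]
  · have h2 : ((m + 1 : ℕ) : ℝ) * x * lagP m (a + 1) x =
        ∑ k ∈ Finset.range (m + 1 + 1), (k : ℝ) * ((-1 : ℝ) ^ (m + 1 - k) *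
          (((m + 1).factorial : ℝ) / (k.factorial : ℝ)) *
          ((∏ j ∈ Finset.Icc (k + 1) (m + 1), (a + (j : ℝ))) / ((m + 1 - k).factorial : ℝ)) * x ^ k) := by
      rw [Finset.sum_range_succ', lagP, Finset.mul_sum]
      simp only [Nat.cast_zero, zero_mul, add_zero]
      refine Finset.sum_congr rfl fun k hk => ?_
      have hk' : k ≤ m := by have := Finset.mem_range.1 hk; omega
      rw [prod_aux2 a k m hk', Nat.add_sub_add_right, Nat.factorial_succ, Nat.factorial_succ]
      have := Nat.factorial_ne_zero k
      have h3 : ((k : ℝ) + 1) ≠ 0 := by positivity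
      push_cast
      field_simp
      ring
    rw [Nat.add_sub_cancel, h2, lagP, lagP, Finset.mul_sum, Finset.mul_sum, ← Finset.sum_add_distrib]
    refine Finset.sum_congr rfl fun k hk => ?_
    have hk' : k ≤ m + 1 := by have := Finset.mem_range.1 hk; omega
    have := prod_aux1 a k (m + 1) hk'
    linear_combination ((-1 : ℝ) ^ (m + 1 - k) *
          (((m + 1).factorial : ℝ) / (k.factorial : ℝ)) / ((m + 1 - k).factorial : ℝ) * x ^ k) * this

lemma tendsto_ratio (c : ℝ) : Tendsto (fun β : ℝ => (β + c) / β) atTop (𝓝 1) := by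
  have h : Tendsto (fun β : ℝ => 1 + c / β) atTop (𝓝 (1 + 0)) :=
    tendsto_const_nhds.add (tendsto_const_nhds.div_atTop tendsto_id)
  rw [add_zero] at h
  refine h.congr' ?_
  filter_upwards [eventually_gt_atTop 0] with β hβ
  field_simp

lemma tendsto_prod_ratio (s : Finset ℕ) (c : ℝ) :
    Tendsto (fun β : ℝ => (∏ j ∈ s, (β + c + (j : ℝ))) / β ^ s.card) atTop (𝓝 1) := by
  have h : Tendsto (fun β : ℝ => ∏ j ∈ s, ((β + (c + (j : ℝ))) / β)) atTop (𝓝 (∏ j ∈ s, 1)) :=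
    tendsto_finsetProd _ fun j _ => tendsto_ratio _
  rw [Finset.prod_const_one] at h
  refine h.congr fun β => ?_
  rw [Finset.prod_div_distrib, Finset.prod_const]
  simp only [add_assoc]

lemma jac_tendsto (n : ℕ) (α c x : ℝ) :
    Tendsto (fun β : ℝ => β ^ n * jacP n α (β + c) (1 - 2 * x / β)) atTop
      (𝓝 ((-2 : ℝ) ^ n * lagP n α x)) := by
  have h1 : Tendsto (fun β : ℝ => 2 ^ n * (n.factorial : ℝ) /
      ((∏ j ∈ Finset.range n, (β + (n + α + c + 1) + (j : ℝ))) / β ^ (Finset.range n).card))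
      atTop (𝓝 (2 ^ n * (n.factorial : ℝ) / 1)) :=
    tendsto_const_nhds.div (tendsto_prod_ratio _ _) one_ne_zero
  have hx : Tendsto (fun β : ℝ => (1 - x / β)) atTop (𝓝 (1 - 0)) :=
    tendsto_const_nhds.sub (tendsto_const_nhds.div_atTop tendsto_id)
  have h2 : Tendsto (fun β : ℝ => ∑ s ∈ Finset.range (n + 1),
      ((∏ j ∈ Finset.Icc (s + 1) n, (α + (j : ℝ))) / ((n - s).factorial : ℝ)) *
        (((∏ j ∈ Finset.Icc (n - s + 1) n, (β + c + (j : ℝ))) /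
          β ^ (Finset.Icc (n - s + 1) n).card) / (s.factorial : ℝ)) *
        (-x) ^ s * (1 - x / β) ^ (n - s)) atTop
      (𝓝 (∑ s ∈ Finset.range (n + 1),
      ((∏ j ∈ Finset.Icc (s + 1) n, (α + (j : ℝ))) / ((n - s).factorial : ℝ)) *
        (1 / (s.factorial : ℝ)) * (-x) ^ s * (1 - 0) ^ (n - s))) := by
    refine tendsto_finsetSum _ fun s _ => ?_
    exact ((tendsto_const_nhds.mul ((tendsto_prod_ratio _ _).div_const _)).mul
      tendsto_const_nhds).mul (hx.pow _)
  have h3 := h1.mul h2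
  have e : (2 ^ n * (n.factorial : ℝ) / 1) * (∑ s ∈ Finset.range (n + 1),
      ((∏ j ∈ Finset.Icc (s + 1) n, (α + (j : ℝ))) / ((n - s).factorial : ℝ)) *
        (1 / (s.factorial : ℝ)) * (-x) ^ s * (1 - 0) ^ (n - s)) = (-2 : ℝ) ^ n * lagP n α x := by
    rw [lagP, Finset.mul_sum, Finset.mul_sum]
    refine Finset.sum_congr rfl fun s hs => ?_
    have hs' : s ≤ n := by have := Finset.mem_range.1 hs; omega
    have e1 : (-2 : ℝ) ^ n * (-1) ^ (n - s) = 2 ^ n * (-1) ^ s := by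
      obtain ⟨d, rfl⟩ := Nat.exists_eq_add_of_le hs'
      rw [Nat.add_sub_cancel_left, neg_pow (2 : ℝ), pow_add (-1 : ℝ)]
      have : (-1 : ℝ) ^ d * (-1) ^ d = 1 := by rw [← mul_pow]; simp
      linear_combination (-1 : ℝ) ^ s * 2 ^ (s + d) * this
    rw [neg_pow x, sub_zero, one_pow]
    linear_combination (-((n.factorial : ℝ) / (s.factorial : ℝ)) *
      ((∏ j ∈ Finset.Icc (s + 1) n, (α + (j : ℝ))) / ((n - s).factorial : ℝ)) * x ^ s) * e1
  rw [e] at h3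
  refine h3.congr' ?_
  filter_upwards [eventually_gt_atTop 0] with β hβ
  have hβ' : β ≠ 0 := hβ.ne'
  rw [jacP, poch, ← mul_assoc]
  congr 1
  · rw [Finset.card_range, div_div_eq_mul_div]
    have : ∀ j : ℕ, β + (n + α + c + 1) + (j : ℝ) = n + α + (β + c) + 1 + j := fun j => by ring
    simp only [this]
    ring
  · refine Finset.sum_congr rfl fun s hs => ?_
    have hs' : s ≤ n := by have := Finset.mem_range.1 hs; omega
    have hc : (Finset.Icc (n - s + 1) n).card = s := by rw [Nat.card_Icc]; omega
    have e1 : (1 - 2 * x / β - 1) / 2 = (-x) / β := by field_simp; ring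
    have e2 : (1 - 2 * x / β + 1) / 2 = 1 - x / β := by field_simp; ring
    rw [hc, e1, e2, div_pow]
    ring

lemma jac_tendsto_pred (n : ℕ) (α x : ℝ) :
    Tendsto (fun β : ℝ => β ^ n * ((n : ℝ) * (1 - (1 - 2 * x / β)) *
      jacP (n - 1) α (β + 1) (1 - 2 * x / β))) atTop
      (𝓝 (-((-2 : ℝ) ^ n * (n * x * lagP (n - 1) α x)))) := by
  rcases n with _ | n
  · simp
  · have h := (jac_tendsto n α 1 x).const_mul (((n + 1 : ℕ) : ℝ) * (2 * x))
    rw [Nat.add_sub_cancel]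
    have e : ((n + 1 : ℕ) : ℝ) * (2 * x) * ((-2 : ℝ) ^ n * lagP n α x) =
      (-((-2 : ℝ) ^ (n + 1) * (((n + 1 : ℕ) : ℝ) * x * lagP n α x))) := by ring
    rw [e] at h
    refine h.congr' ?_
    filter_upwards [eventually_gt_atTop 0] with β hβ
    rw [sub_sub_cancel, pow_succ]
    generalize jacP n α (β + 1) (1 - 2 * x / β) = J
    field_simp

theorem stmt1 (m n : ℕ) (α : ℝ) (h : α + (n : ℝ) - (m : ℝ) ≠ 0) (x : ℝ) :
    Filter.Tendsto (fun β : ℝ => β ^ (n + m) * jacII m n α β (1 - 2 * x / β)) Filter.atTop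
      (nhds ((-2 : ℝ) ^ (n + m) * lagII m n α x)) := by
  have A := jac_tendsto m (-α) 0 x
  have B := jac_tendsto n α 0 x
  have C := jac_tendsto_pred n (α + 1) x
  have D := jac_tendsto_pred m (-α + 1) x
  simp only [add_zero] at A B
  have T := ((A.mul (C.sub (B.const_mul α))).sub (D.mul B)).const_mul
    (1 / ((m : ℝ) - (n : ℝ) - α))
  convert T using 1
  · funext β
    rw [jacII]
    ring
  · congr 1
    have id := lag_identity m (-α) x
    have h' : (m : ℝ) - n - α ≠ 0 := by contrapose! h; linarith
    have e : 1 / ((m : ℝ) - n - α) = - (1 / (α + n - m)) := by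
      rw [← one_div_neg_eq_neg_one_div]; congr 1; ring
    rw [lagII, e, pow_add]
    linear_combination (1 / (α + n - m)) * (-2 : ℝ) ^ n * (-2) ^ m * lagP n α x * id
end

section
/- Let m ∈ ℕ be even and n ≥ m+1. For every x ∈ ℝ, lim_{α→∞} α^{n/2} P̂^{(III,m)}_n(x/√α; α, α) = Ĥ^{(III,m)}_n(x), the limit being taken along real α → +∞ (for all sufficiently large α all occurring polynomials are defined). -/
open Finset Filter Topology

lemma jh_choose_nat (n r : ℕ) (u v : ℝ) :
    ∑ s ∈ Finset.range (n + 1), (r.choose (n - s) : ℝ) * (r.choose s : ℝ) * u ^ s * v ^ (n - s) =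
    ∑ k ∈ Finset.range (n / 2 + 1), (r.choose (n - k) : ℝ) * ((n - k).choose k : ℝ) *
      (u + v) ^ (n - 2 * k) * (u * v) ^ k := by
  have key : ∀ (w : ℝ) (s : ℕ), ((1 + Polynomial.C w * Polynomial.X) ^ r : Polynomial ℝ).coeff s
      = r.choose s * w ^ s := by
    intro w s
    have : ((1 + Polynomial.C w * Polynomial.X) ^ r : Polynomial ℝ)
        = ((1 + Polynomial.X) ^ r : Polynomial ℝ).comp (Polynomial.C w * Polynomial.X) := by
      simp
    rw [this, Polynomial.comp_C_mul_X_coeff, Polynomial.coeff_one_add_X_pow]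
  have key2 : ∀ (p q : ℝ) (j i : ℕ), i ≤ j → 
      ((Polynomial.C p + Polynomial.C q * Polynomial.X) ^ j : Polynomial ℝ).coeff i
      = p ^ (j - i) * q ^ i * j.choose i := by
    intro p q j i hij
    rw [add_comm, add_pow, Polynomial.finsetSum_coeff, Finset.sum_eq_single i]
    · rw [mul_pow, ← Polynomial.C_pow, ← Polynomial.C_pow, ← Polynomial.C_eq_natCast,
        Polynomial.coeff_mul_C, Polynomial.coeff_mul_C, Polynomial.coeff_C_mul,
        Polynomial.coeff_X_pow]
      simp only [if_true, mul_one]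
      ring
    · intro b _ hb
      rw [mul_pow, ← Polynomial.C_pow, ← Polynomial.C_pow, ← Polynomial.C_eq_natCast,
        Polynomial.coeff_mul_C, Polynomial.coeff_mul_C, Polynomial.coeff_C_mul,
        Polynomial.coeff_X_pow]
      simp [hb.symm]
    · intro h; exact absurd (Finset.mem_range.2 (by omega)) h
  have key3 : ∀ (p q : ℝ) (j i : ℕ), j < i → 
      ((Polynomial.C p + Polynomial.C q * Polynomial.X) ^ j : Polynomial ℝ).coeff i = 0 := by
    intro p q j i hij
    apply Polynomial.coeff_eq_zero_of_natDegree_lt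
    refine lt_of_le_of_lt ?_ hij
    have : (Polynomial.C p + Polynomial.C q * Polynomial.X : Polynomial ℝ).natDegree ≤ 1 := by
      compute_degree
    calc _ ≤ j * _ := Polynomial.natDegree_pow_le
      _ ≤ j * 1 := Nat.mul_le_mul_left _ this
      _ = j := mul_one j
  have h1 : ((1 + Polynomial.C u * Polynomial.X) ^ r * (1 + Polynomial.C v * Polynomial.X) ^ r
      : Polynomial ℝ) = (1 + Polynomial.X *
        (Polynomial.C (u + v) + Polynomial.C (u * v) * Polynomial.X)) ^ r := by
    rw [← mul_pow]; congr 1; simp only [map_add, map_mul]; ring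
  have h2 := congrArg (fun P => Polynomial.coeff P n) h1
  simp only [Polynomial.coeff_mul] at h2
  rw [Finset.Nat.sum_antidiagonal_eq_sum_range_succ_mk] at h2
  simp only [key] at h2
  have h3 : ((1 + Polynomial.X *
        (Polynomial.C (u + v) + Polynomial.C (u * v) * Polynomial.X)) ^ r : Polynomial ℝ).coeff n
      = ∑ j ∈ Finset.range (n + 1), (r.choose j : ℝ) *
        ((Polynomial.C (u + v) + Polynomial.C (u * v) * Polynomial.X) ^ j
          : Polynomial ℝ).coeff (n - j) := by
    rw [add_comm, add_pow, Polynomial.finsetSum_coeff]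
    have e : ∀ j, ((Polynomial.X * (Polynomial.C (u + v) + Polynomial.C (u * v) * Polynomial.X)) ^ j
        * 1 ^ (r - j) * ((r.choose j : ℕ) : Polynomial ℝ)).coeff n =
        if j ≤ n then (r.choose j : ℝ) *
        ((Polynomial.C (u + v) + Polynomial.C (u * v) * Polynomial.X) ^ j
          : Polynomial ℝ).coeff (n - j) else 0 := by
      intro j
      rw [one_pow, mul_one, ← Polynomial.C_eq_natCast, Polynomial.coeff_mul_C, mul_pow,
        Polynomial.coeff_X_pow_mul']
      split_ifs <;> simp [mul_comm]
    rw [Finset.sum_congr rfl (fun j _ => e j)]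
    rw [Finset.sum_subset (s₂ := Finset.range (r + n + 1))
      (Finset.range_subset_range.2 (by omega))]
    · symm
      rw [Finset.sum_congr rfl (g := fun j => if j ≤ n then (r.choose j : ℝ) *
        ((Polynomial.C (u + v) + Polynomial.C (u * v) * Polynomial.X) ^ j
          : Polynomial ℝ).coeff (n - j) else 0)]
      · apply Finset.sum_subset (Finset.range_subset_range.2 (by omega))
        intro j _ hj
        rw [if_neg]; simp at hj; omega
      · intro j hj
        rw [if_pos]; simp at hj; omega
    · intro j _ hj
      rw [Nat.choose_eq_zero_of_lt (by simp at hj; omega)]; simp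
  rw [h3] at h2
  rw [← Finset.sum_range_reflect (fun j => (r.choose j : ℝ) * _)] at h2
  rw [Finset.sum_congr rfl (g := fun s => (r.choose s : ℝ) * u ^ s *
    ((r.choose (n - s) : ℝ) * v ^ (n - s))) (fun s _ => by ring), h2]
  symm
  rw [Finset.sum_congr rfl (g := fun k => (r.choose (n + 1 - 1 - k) : ℝ) *
        ((Polynomial.C (u + v) + Polynomial.C (u * v) * Polynomial.X) ^ (n + 1 - 1 - k)
          : Polynomial ℝ).coeff (n - (n + 1 - 1 - k)))]
  · apply Finset.sum_subset (Finset.range_subset_range.2 (by omega))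
    intro k hk hk2
    simp at hk hk2
    rw [key3 _ _ _ _ (by omega), mul_zero]
  · intro k hk
    simp at hk
    have e1 : n + 1 - 1 - k = n - k := by omega
    have e2 : n - (n - k) = k := by omega
    have e3 : n - k - k = n - 2 * k := by omega
    rw [e1, e2, key2 _ _ _ _ (by omega), e3]
    ring

lemma jh_desc (n : ℕ) (r u v : ℝ) :
    ∑ s ∈ Finset.range (n + 1), ((descPochhammer ℝ (n - s)).eval r / ((n - s).factorial : ℝ)) *
      ((descPochhammer ℝ s).eval r / (s.factorial : ℝ)) * u ^ s * v ^ (n - s) =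
    ∑ k ∈ Finset.range (n / 2 + 1), (descPochhammer ℝ (n - k)).eval r /
      ((k.factorial : ℝ) * ((n - 2 * k).factorial : ℝ)) *
      (u + v) ^ (n - 2 * k) * (u * v) ^ k := by
  let P : Polynomial ℝ := ∑ s ∈ Finset.range (n + 1),
    (descPochhammer ℝ (n - s)) * (descPochhammer ℝ s) *
      Polynomial.C (1 / ((n - s).factorial : ℝ) * (1 / (s.factorial : ℝ)) * u ^ s * v ^ (n - s))
  let Q : Polynomial ℝ := ∑ k ∈ Finset.range (n / 2 + 1), (descPochhammer ℝ (n - k)) *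
      Polynomial.C (1 / ((k.factorial : ℝ) * ((n - 2 * k).factorial : ℝ)) *
      (u + v) ^ (n - 2 * k) * (u * v) ^ k)
  have hP : ∀ t, P.eval t = ∑ s ∈ Finset.range (n + 1),
      ((descPochhammer ℝ (n - s)).eval t / ((n - s).factorial : ℝ)) *
      ((descPochhammer ℝ s).eval t / (s.factorial : ℝ)) * u ^ s * v ^ (n - s) := by
    intro t
    simp only [P, Polynomial.eval_finsetSum, Polynomial.eval_mul, Polynomial.eval_C]
    exact Finset.sum_congr rfl (fun s _ => by ring)
  have hQ : ∀ t, Q.eval t = ∑ k ∈ Finset.range (n / 2 + 1), (descPochhammer ℝ (n - k)).eval t /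
      ((k.factorial : ℝ) * ((n - 2 * k).factorial : ℝ)) *
      (u + v) ^ (n - 2 * k) * (u * v) ^ k := by
    intro t
    simp only [Q, Polynomial.eval_finsetSum, Polynomial.eval_mul, Polynomial.eval_C]
    exact Finset.sum_congr rfl (fun s _ => by ring)
  have hPQ : P = Q := by
    apply Polynomial.eq_of_infinite_eval_eq
    apply Set.Infinite.mono (s := Set.range (fun r : ℕ => (r : ℝ)))
    · rintro _ ⟨r, rfl⟩
      simp only [Set.mem_ofPred_eq, hP, hQ, descPochhammer_eval_eq_descFactorial]
      have hf : ∀ s : ℕ, ((r.descFactorial s : ℕ) : ℝ) = s.factorial * r.choose s := by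
        intro s
        rw [Nat.descFactorial_eq_factorial_mul_choose]; push_cast; ring
      have h := jh_choose_nat n r u v
      simp only [hf]
      refine Eq.trans ?_ (h.trans ?_)
      · refine Finset.sum_congr rfl (fun s _ => ?_)
        have h1 : ((n - s).factorial : ℝ) ≠ 0 := by positivity
        have h2 : (s.factorial : ℝ) ≠ 0 := by positivity
        field_simp
      · refine Finset.sum_congr rfl (fun k hk => ?_)
        simp at hk
        have h3 : ((n - k).factorial : ℝ) = (n - k).choose k * k.factorial
            * (n - 2 * k).factorial := by
          rw [← Nat.choose_mul_factorial_mul_factorial (n := n - k) (k := k) (by omega)]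
          rw [show n - k - k = n - 2 * k by omega]
          push_cast; ring
        rw [h3]
        have h1 : ((n - 2 * k).factorial : ℝ) ≠ 0 := by positivity
        have h2 : (k.factorial : ℝ) ≠ 0 := by positivity
        field_simp
    · exact Set.infinite_range_of_injective Nat.cast_injective
  rw [← hP, ← hQ, hPQ]

lemma jh_prod (n k : ℕ) (hk : k ≤ n) (a : ℝ) :
    ∏ j ∈ Finset.Icc (n - k + 1) n, (a + (j : ℝ)) = (descPochhammer ℝ k).eval (a + n) := by
  rw [descPochhammer_eval_eq_prod_range]
  symm
  apply Finset.prod_bij (fun i _ => n - i)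
  · intro i hi; simp at hi ⊢; omega
  · intro i hi j hj h; simp at hi hj; omega
  · intro b hb; simp at hb; exact ⟨n - b, by simp; omega, by omega⟩
  · intro i hi
    simp at hi
    rw [Nat.cast_sub (by omega)]; ring

lemma jh_jac (n : ℕ) (a x : ℝ) : jacP n a a x =
    (2 ^ n * (n.factorial : ℝ) / poch ((n : ℝ) + a + a + 1) n) *
    ∑ k ∈ Finset.range (n / 2 + 1), (descPochhammer ℝ (n - k)).eval (a + n) /
      ((k.factorial : ℝ) * ((n - 2 * k).factorial : ℝ)) *
      x ^ (n - 2 * k) * ((x ^ 2 - 1) / 4) ^ k := by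
  have h := jh_desc n (a + n) ((x - 1) / 2) ((x + 1) / 2)
  rw [show (x - 1) / 2 + (x + 1) / 2 = x by ring,
    show (x - 1) / 2 * ((x + 1) / 2) = (x ^ 2 - 1) / 4 by ring] at h
  rw [jacP, ← h]
  congr 1
  refine Finset.sum_congr rfl (fun s hs => ?_)
  simp at hs
  rw [← jh_prod n s (by omega), ← jh_prod n (n - s) (by omega),
    show n - (n - s) = s by omega]

/-- Real limit polynomial. -/
noncomputable def jhH (n : ℕ) (ε x : ℝ) : ℝ :=
  ∑ k ∈ Finset.range (n / 2 + 1), (-ε) ^ k *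
      ((n.factorial : ℝ) / ((k.factorial : ℝ) * ((n - 2 * k).factorial : ℝ) * 4 ^ k)) *
      x ^ (n - 2 * k)

lemma jh_lin (e c : ℝ) : Tendsto (fun α : ℝ => (e * α + c) / α) atTop (𝓝 e) := by
  have h : Tendsto (fun α : ℝ => e + c * α⁻¹) atTop (𝓝 (e + c * 0)) :=
    tendsto_const_nhds.add (tendsto_const_nhds.mul tendsto_inv_atTop_zero)
  rw [mul_zero, add_zero] at h
  refine h.congr' ?_
  filter_upwards [eventually_gt_atTop 0] with α hα
  field_simp

lemma jh_dlim (k : ℕ) (e c : ℝ) :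
    Tendsto (fun α : ℝ => (descPochhammer ℝ k).eval (e * α + c) / α ^ k) atTop (𝓝 (e ^ k)) := by
  have h : Tendsto (fun α : ℝ => ∏ i ∈ Finset.range k, ((e * α + (c - i)) / α)) atTop
      (𝓝 (∏ i ∈ Finset.range k, e)) := tendsto_finsetProd _ (fun i _ => jh_lin e (c - i))
  simp only [Finset.prod_div_distrib, Finset.prod_const, Finset.card_range] at h
  refine h.congr (fun α => ?_)
  rw [descPochhammer_eval_eq_prod_range]
  simp only [add_sub_assoc]

lemma jh_plim (k : ℕ) (e c : ℝ) :
    Tendsto (fun α : ℝ => poch (e * α + c) k / α ^ k) atTop (𝓝 (e ^ k)) := by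
  have h : Tendsto (fun α : ℝ => ∏ i ∈ Finset.range k, ((e * α + (c + i)) / α)) atTop
      (𝓝 (∏ i ∈ Finset.range k, e)) := tendsto_finsetProd _ (fun i _ => jh_lin e (c + i))
  simp only [Finset.prod_div_distrib, Finset.prod_const, Finset.card_range] at h
  refine h.congr (fun α => ?_)
  rw [poch]
  simp only [add_assoc]

lemma jh_lim (n : ℕ) (ε c x : ℝ) (hε : ε = 1 ∨ ε = -1) :
    Tendsto (fun α : ℝ => √α ^ n * jacP n (ε * α + c) (ε * α + c) (x / √α)) atTop
      (𝓝 (jhH n ε x)) := by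
  have hε2 : ε ^ 2 = 1 := by rcases hε with h | h <;> rw [h] <;> norm_num
  have hε0 : ε ≠ 0 := by rcases hε with h | h <;> rw [h] <;> norm_num
  have h : Tendsto (fun α : ℝ => ∑ k ∈ Finset.range (n / 2 + 1),
      2 ^ n * (n.factorial : ℝ) / (poch ((2 * ε) * α + (n + 2 * c + 1)) n / α ^ n) *
      ((descPochhammer ℝ (n - k)).eval (ε * α + (c + n)) / α ^ (n - k)) /
      ((k.factorial : ℝ) * ((n - 2 * k).factorial : ℝ)) * x ^ (n - 2 * k) *
      ((x ^ 2 * α⁻¹ - 1) / 4) ^ k) atTop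
      (𝓝 (∑ k ∈ Finset.range (n / 2 + 1),
      2 ^ n * (n.factorial : ℝ) / ((2 * ε) ^ n) * ε ^ (n - k) /
      ((k.factorial : ℝ) * ((n - 2 * k).factorial : ℝ)) * x ^ (n - 2 * k) *
      ((x ^ 2 * 0 - 1) / 4) ^ k)) := by
    refine tendsto_finsetSum _ (fun k _ => ?_)
    refine ((((tendsto_const_nhds.div (jh_plim n _ _) (by positivity)).mul
      (jh_dlim _ _ _)).div_const _).mul_const _).mul ?_
    exact (((tendsto_const_nhds.mul tendsto_inv_atTop_zero).sub_const _).div_const _).pow _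
  have e : (∑ k ∈ Finset.range (n / 2 + 1),
      2 ^ n * (n.factorial : ℝ) / ((2 * ε) ^ n) * ε ^ (n - k) /
      ((k.factorial : ℝ) * ((n - 2 * k).factorial : ℝ)) * x ^ (n - 2 * k) *
      ((x ^ 2 * 0 - 1) / 4) ^ k) = jhH n ε x := by
    refine Finset.sum_congr rfl (fun k hk => ?_)
    simp at hk
    have h1 : ε ^ n = ε ^ (n - k) * ε ^ k := by rw [← pow_add]; congr 1; omega
    have h2 : ε ^ k * ε ^ k = 1 := by rw [← mul_pow, ← sq, hε2, one_pow]
    have h3 : (ε ^ k)⁻¹ = ε ^ k := inv_eq_of_mul_eq_one_left h2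
    have h4 : ε ^ (n - k) ≠ 0 := by positivity
    have h5 : 2 ^ n * (n.factorial : ℝ) / ((2 * ε) ^ n) * ε ^ (n - k)
        = n.factorial * (ε ^ k)⁻¹ := by
      rw [mul_pow, h1]; field_simp
    rw [h5, h3, neg_pow ε k, mul_zero, zero_sub, neg_div, neg_pow (1 / 4 : ℝ) k, div_pow, one_pow]
    field_simp
  rw [e] at h
  refine h.congr' ?_
  filter_upwards [eventually_gt_atTop 0] with α hα
  rw [jh_jac, mul_left_comm, ← mul_assoc, Finset.mul_sum]
  refine Finset.sum_congr rfl (fun k hk => ?_)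
  simp at hk
  have hs : 0 < √α := Real.sqrt_pos.2 hα
  have e1 : (n : ℝ) + (ε * α + c) + (ε * α + c) + 1 = (2 * ε) * α + (n + 2 * c + 1) := by ring
  have e2 : ε * α + c + n = ε * α + (c + n) := by ring
  have e3 : (x / √α) ^ 2 = x ^ 2 * α⁻¹ := by rw [div_pow, Real.sq_sqrt hα.le]; rfl
  have e4 : √α ^ n = √α ^ (n - 2 * k) * α ^ k := by
    rw [← Real.sq_sqrt hα.le, ← pow_mul, Real.sqrt_sq hs.le, ← pow_add]; congr 1; omega
  have e5 : α ^ n = α ^ (n - k) * α ^ k := by rw [← pow_add]; congr 1; omega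
  rw [e1, e2, e3, e4, e5, div_pow x]
  have h6 : α ^ (n - k) ≠ 0 := by positivity
  have h7 : √α ^ (n - 2 * k) ≠ 0 := by positivity
  generalize poch _ n = p
  generalize √α ^ (n - 2 * k) = t at *
  generalize α ^ (n - k) = w at *
  generalize ((x ^ 2 * α⁻¹ - 1) / 4) ^ k = z
  rw [div_div_eq_mul_div]
  field_simp

lemma jh_herm1 (n : ℕ) (x : ℝ) : hermC n (x : ℂ) = (jhH n 1 x : ℂ) := by
  rw [hermC, jhH]; push_cast; rfl

lemma jh_herm2 (n : ℕ) (x : ℝ) :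
    hermC n (Complex.I * x) = Complex.I ^ n * (jhH n (-1) x : ℂ) := by
  rw [hermC, jhH]; push_cast
  rw [Finset.mul_sum]
  refine Finset.sum_congr rfl (fun k hk => ?_)
  simp at hk
  have : Complex.I ^ n = Complex.I ^ (n - 2 * k) * (-1) ^ k := by
    rw [← Complex.I_sq, ← pow_mul, ← pow_add]; congr 1; omega
  rw [this, mul_pow]; simp; ring

lemma jh_final (m n : ℕ) (hm : Even m) (hn : m + 1 ≤ n) (x : ℝ) :
    hermIII m n x = ((jhH m (-1) x * jhH (n - m) 1 x +
      m / 2 * jhH (m - 1) (-1) x * jhH (n - m - 1) 1 x : ℝ) : ℂ) := by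
  rw [hermIII, if_neg (by omega)]
  simp only [jh_herm1, jh_herm2]
  have h1 : Complex.I ^ m * Complex.I ^ m = 1 := by
    rw [← mul_pow, Complex.I_mul_I]; exact hm.neg_one_pow
  push_cast
  rcases Nat.eq_zero_or_pos m with rfl | hp
  · simp
  · have h2 : Complex.I ^ m = Complex.I ^ (m - 1) * Complex.I := by
      rw [← pow_succ]; congr 1; omega
    have h3 : Complex.I ^ m * Complex.I * Complex.I ^ (m - 1) = 1 := by
      rw [mul_assoc, mul_comm Complex.I, ← h2, h1]
    linear_combination ((jhH m (-1) x : ℂ) * jhH (n - m) 1 x) * h1 +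
      ((m : ℂ) / 2 * jhH (m - 1) (-1) x * jhH (n - m - 1) 1 x) * h3

theorem stmt3 (m n : ℕ) (hm : Even m) (hn : m + 1 ≤ n) (x : ℝ) :
    Filter.Tendsto
      (fun α : ℝ => ((α ^ ((n : ℝ) / 2) * jacIII m n α α (x / Real.sqrt α) : ℝ) : ℂ))
      Filter.atTop (nhds (hermIII m n x)) := by
  rw [jh_final m n hm hn x]
  refine (Complex.continuous_ofReal.tendsto _).comp ?_
  have A := jh_lim m (-1) 0 x (Or.inr rfl)
  have B := jh_lim (n - m) 1 (-1) x (Or.inl rfl)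
  have C := jh_lim (m - 1) (-1) 1 x (Or.inr rfl)
  have D := jh_lim (n - m - 1) 1 0 x (Or.inl rfl)
  have E := (jh_lin 2 ((n : ℝ) - m - 1)).div (jh_lin 2 ((n : ℝ) - 2 * m - 1)) two_ne_zero
  have F := (tendsto_const_nhds (x := (m : ℝ))).mul
    (((tendsto_const_nhds (x := (1 : ℝ))).sub
    ((tendsto_const_nhds (x := x ^ 2)).mul tendsto_inv_atTop_zero)).div
      (jh_lin 2 ((n : ℝ) - 2 * m - 1)) two_ne_zero)
  have G := (E.mul (A.mul B)).add (F.mul (C.mul D))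
  convert G.congr' ?_ using 2
  · ring
  filter_upwards [eventually_gt_atTop 0] with α hα
  have hs : 0 < √α := Real.sqrt_pos.2 hα
  have r1 : α ^ ((n : ℝ) / 2) = √α ^ n := by
    rw [Real.sqrt_eq_rpow, ← Real.rpow_natCast, ← Real.rpow_mul hα.le]; congr 1; ring
  have r2 : √α ^ n = √α ^ m * √α ^ (n - m) := by rw [← pow_add]; congr 1; omega
  have e3 : (x / √α) ^ 2 = x ^ 2 * α⁻¹ := by rw [div_pow, Real.sq_sqrt hα.le]; rfl
  rw [jacIII, if_neg (by omega), r1, e3]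
  simp only [Pi.div_apply]
  rw [show (-1 : ℝ) * α + 0 = -α by ring, show (1 : ℝ) * α + -1 = α - 1 by ring,
    show (-1 : ℝ) * α + 1 = -α + 1 by ring, show (1 : ℝ) * α + 0 = α by ring,
    div_div_div_cancel_right₀ hα.ne', div_div_eq_mul_div,
    show 2 * α + ((n : ℝ) - 2 * m - 1) = α + α + n - 2 * m - 1 by ring,
    show 2 * α + ((n : ℝ) - m - 1) = α + α + n - m - 1 by ring]
  rcases Nat.eq_zero_or_pos m with rfl | hp
  · simp; ring
  · have r3 : √α ^ n = √α ^ (m - 1) * √α ^ (n - m - 1) * α := by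
      nth_rewrite 4 [← Real.sq_sqrt hα.le]
      rw [← pow_add, ← pow_add]; congr 1; omega
    rw [mul_left_comm (√α ^ n), mul_add (√α ^ n)]
    nth_rewrite 1 [r2]
    rw [r3]
    ring
end

section
/- Let m ∈ ℕ be even and n ≥ m+1. For every x ∈ ℝ, lim_{α→∞} (2α)^{−n/2} L̂^{(III,m)}_n(√(2α)·x + α; α) = Ĥ^{(III,m)}_n(x), the limit being taken along real α → +∞. -/
open Finset Filter Topology

noncomputable def lagCoef (n : ℕ) (a : ℝ) (k : ℕ) : ℝ :=
  if k ≤ n then (-1 : ℝ) ^ (n - k) * ((n.factorial : ℝ) / (k.factorial : ℝ)) *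
      ((∏ j ∈ Finset.Icc (k + 1) n, (a + (j : ℝ))) / ((n - k).factorial : ℝ)) else 0

lemma lagP_eq (n N : ℕ) (h : n + 1 ≤ N) (a x : ℝ) :
    lagP n a x = ∑ k ∈ Finset.range N, lagCoef n a k * x ^ k := by
  have h1 : ∑ k ∈ Finset.range N, lagCoef n a k * x ^ k
      = ∑ k ∈ Finset.range (n+1), lagCoef n a k * x ^ k := by
    symm
    apply Finset.sum_subset
    · intro k hk
      simp at *
      omega
    · intro k _ hk
      simp at hk
      simp [lagCoef, show ¬ k ≤ n by omega]
  rw [h1, lagP]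
  apply Finset.sum_congr rfl
  intro k hk
  simp at hk
  simp [lagCoef, show k ≤ n by omega]

lemma lagCoef_add (k d : ℕ) (a : ℝ) : lagCoef (k + d) a k =
    (-1 : ℝ) ^ d * (((k+d).factorial : ℝ) / (k.factorial : ℝ)) *
      ((∏ j ∈ Finset.range d, (a + k + 1 + (j : ℝ))) / (d.factorial : ℝ)) := by
  have : ∏ j ∈ Finset.Icc (k + 1) (k + d), (a + (j : ℝ))
      = ∏ j ∈ Finset.range d, (a + k + 1 + (j : ℝ)) := by
    rw [← Finset.Ico_add_one_right_eq_Icc, Finset.prod_Ico_eq_prod_range]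
    rw [show k + d + 1 - (k+1) = d by omega]
    apply Finset.prod_congr rfl
    intro j _
    push_cast
    ring
  simp [lagCoef, this]

lemma lagCoef_gt (n k : ℕ) (h : n < k) (a : ℝ) : lagCoef n a k = 0 := by
  simp [lagCoef, h]

lemma lagCoef_zero_rec (n : ℕ) (a : ℝ) : lagCoef (n+2) a 0 =
    - (2*n+3+a) * lagCoef (n+1) a 0 - (n+1)*(n+1+a) * lagCoef n a 0 := by
  have h0 := lagCoef_add 0 n a
  have h1 := lagCoef_add 0 (n+1) a
  have h2 := lagCoef_add 0 (n+2) a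
  simp only [zero_add] at h0 h1 h2
  rw [h0, h1, h2]
  simp only [Finset.prod_range_succ, Nat.factorial_succ, pow_succ]
  generalize ∏ j ∈ Finset.range n, (a + ((0:ℕ):ℝ) + 1 + (j : ℝ)) = P
  have := Nat.factorial_ne_zero n
  push_cast
  field_simp
  ring

lemma lagCoef_succ_rec (n k : ℕ) (a : ℝ) : lagCoef (n+2) a (k+1) = lagCoef (n+1) a k
    - (2*n+3+a) * lagCoef (n+1) a (k+1) - (n+1)*(n+1+a) * lagCoef n a (k+1) := by
  rcases lt_trichotomy k n with h | h | h
  · obtain ⟨d, rfl⟩ : ∃ d, n = k + 1 + d := ⟨n - k - 1, by omega⟩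
    have h0 := lagCoef_add (k+1) d a
    have h1 := lagCoef_add (k+1) (d+1) a
    have h2 := lagCoef_add (k+1) (d+2) a
    have h3 := lagCoef_add k (d+2) a
    rw [show k + 1 + d + 2 = k + 1 + (d+2) by ring, h2,
      show k + 1 + d + 1 = k + 1 + (d+1) by ring, h1, h0,
      show k + 1 + (d+1) = k + (d+2) by ring, h3,
      show k + 1 + (d + 2) = (k+d)+3 by ring, show k + (d + 2) = (k+d)+2 by ring,
      show k + 1 + d = (k+d)+1 by ring]
    rw [Finset.prod_range_succ' (fun j : ℕ => a + (k:ℝ) + 1 + (j:ℝ)) (d+1)]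
    have : ∏ j ∈ Finset.range (d+1), (a + (k:ℝ) + 1 + ((j+1:ℕ) : ℝ))
      = ∏ j ∈ Finset.range (d+1), (a + ((k+1:ℕ):ℝ) + 1 + (j : ℝ)) := by
      apply Finset.prod_congr rfl
      intro j _
      push_cast
      ring
    rw [this]
    simp only [Finset.prod_range_succ, Nat.factorial_succ, pow_succ]
    generalize ∏ j ∈ Finset.range d, (a + ((k+1:ℕ):ℝ) + 1 + (j : ℝ)) = P
    have := Nat.factorial_ne_zero k
    have := Nat.factorial_ne_zero d
    have := Nat.factorial_ne_zero (k+d)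
    push_cast
    field_simp
    ring
  · subst h
    have h1 := lagCoef_add (k+1) 1 a
    have h2 := lagCoef_add k 1 a
    have h3 := lagCoef_add (k+1) 0 a
    rw [lagCoef_gt k (k+1) (by omega), show k + 2 = k+1+1 by ring, h1, h2,
      show lagCoef (k+1) a (k+1) = _ from h3]
    simp only [Finset.prod_range_succ, Nat.factorial_succ, pow_succ]
    have := Nat.factorial_ne_zero k
    push_cast
    simp
    field_simp
    ring
  · rw [lagCoef_gt n (k+1) (by omega), lagCoef_gt (n+1) (k+1) (by omega)]
    rcases eq_or_ne k (n+1) with h | h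
    · subst h
      have h1 := lagCoef_add (n+1+1) 0 a
      have h2 := lagCoef_add (n+1) 0 a
      rw [show lagCoef (n+2) a (n+1+1) = _ from h1, show lagCoef (n+1) a (n+1) = _ from h2]
      have := Nat.factorial_ne_zero (n+1)
      have := Nat.factorial_ne_zero (n+1+1)
      simp
      field_simp
    · rw [lagCoef_gt (n+1) k (by omega), lagCoef_gt (n+2) (k+1) (by omega)]
      ring

lemma lagP_rec (n : ℕ) (a x : ℝ) : lagP (n+2) a x =
    (x - (2*n+3+a)) * lagP (n+1) a x - (n+1)*(n+1+a) * lagP n a x := by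
  rw [sub_mul, lagP_eq (n+2) (n+2+1) le_rfl,
    lagP_eq n (n+2+1) (by omega)]
  nth_rewrite 1 [lagP_eq (n+1) (n+2) le_rfl]
  rw [lagP_eq (n+1) (n+2+1) (by omega)]
  rw [Finset.sum_range_succ', Finset.sum_range_succ' _ (n+2), Finset.sum_range_succ' _ (n+2)]
  simp only [lagCoef_zero_rec, lagCoef_succ_rec]
  generalize (2*(n:ℝ)+3+a) = U
  generalize ((n:ℝ)+1)*(n+1+a) = V
  simp only [mul_add, Finset.mul_sum]
  have e : ∀ A B C D E F G : ℝ, A = B - C - D → A + (- U * E - V * F) * G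
     = B - (C + U * (E * G)) - (D + V * (F * G)) := by
    intros; subst_vars; ring
  apply e
  rw [← Finset.sum_sub_distrib, ← Finset.sum_sub_distrib]
  apply Finset.sum_congr rfl
  intros
  ring

noncomputable def hermT (n : ℕ) (z : ℂ) (k : ℕ) : ℂ :=
  if 2 * k ≤ n then (-1 : ℂ) ^ k *
      ((n.factorial : ℂ) / ((k.factorial : ℂ) * ((n - 2 * k).factorial : ℂ) * 4 ^ k)) *
      z ^ (n - 2 * k) else 0

lemma hermC_eq (n N : ℕ) (h : n / 2 + 1 ≤ N) (z : ℂ) :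
    hermC n z = ∑ k ∈ Finset.range N, hermT n z k := by
  have h1 : ∑ k ∈ Finset.range N, hermT n z k
      = ∑ k ∈ Finset.range (n/2+1), hermT n z k := by
    symm
    apply Finset.sum_subset
    · intro k hk
      simp at *
      omega
    · intro k _ hk
      simp at hk
      simp [hermT, show ¬ 2 * k ≤ n by omega]
  rw [h1, hermC]
  apply Finset.sum_congr rfl
  intro k hk
  simp at hk
  simp [hermT, show 2 * k ≤ n by omega]

lemma hermT_zero (n : ℕ) (z : ℂ) : hermT n z 0 = z ^ n := by
  have := Nat.factorial_ne_zero n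
  simp [hermT]
  field_simp

lemma hermT_rec (n : ℕ) (z : ℂ) (k : ℕ) : hermT (n+2) z (k+1) =
    z * hermT (n+1) z (k+1) - (n+1)/2 * hermT n z k := by
  by_cases h : 2 * k ≤ n
  · obtain ⟨d, rfl⟩ : ∃ d, n = 2 * k + d := ⟨n - 2*k, by omega⟩
    rcases d with _ | d
    · simp only [hermT, if_pos h, if_neg (show ¬ 2 * (k+1) ≤ 2 * k + 0 + 1 by omega),
        if_pos (show 2 * (k+1) ≤ 2 * k + 0 + 2 by omega)]
      rw [show 2 * k + 0 + 2 - 2 * (k+1) = 0 by omega, show 2 * k + 0 - 2 * k = 0 by omega]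
      simp only [add_zero, Nat.factorial_succ, pow_succ]
      have := Nat.factorial_ne_zero k
      push_cast
      have h3 : (k:ℂ) + 1 ≠ 0 := by exact_mod_cast Nat.succ_ne_zero k
      field_simp
      simp
      ring
    · simp only [hermT, if_pos h, if_pos (show 2 * (k+1) ≤ 2 * k + (d+1) + 1 by omega),
        if_pos (show 2 * (k+1) ≤ 2 * k + (d+1) + 2 by omega)]
      rw [show 2 * k + (d+1) + 2 - 2 * (k+1) = d+1 by omega,
        show 2 * k + (d+1) - 2 * k = d+1 by omega,
        show 2 * k + (d+1) +1 - 2 * (k+1) = d by omega]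
      rw [show 2 * k + (d+1) = (2*k+d)+1 by ring]
      simp only [Nat.factorial_succ, pow_succ]
      have := Nat.factorial_ne_zero k
      have := Nat.factorial_ne_zero d
      push_cast
      have h3 : (k:ℂ) + 1 ≠ 0 := by exact_mod_cast Nat.succ_ne_zero k
      have h4 : (d:ℂ) + 1 ≠ 0 := by exact_mod_cast Nat.succ_ne_zero d
      field_simp
      ring
  · simp [hermT, h, show ¬ 2 * (k+1) ≤ n + 2 by omega, show ¬ 2 * (k+1) ≤ n + 1 by omega]

lemma hermC_rec (n : ℕ) (z : ℂ) : hermC (n+2) z =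
    z * hermC (n+1) z - (n+1)/2 * hermC n z := by
  rw [hermC_eq (n+2) (n+2+1) (by omega), hermC_eq (n+1) (n+2+1) (by omega),
    hermC_eq n (n+2) (by omega)]
  rw [Finset.sum_range_succ', Finset.sum_range_succ' _ (n+2)]
  simp only [hermT_rec, hermT_zero, mul_add, Finset.mul_sum, Finset.sum_sub_distrib]
  ring

lemma lag_lim (ε : ℝ) (ω : ℂ) (hω : ω ^ 2 = ε) (c x : ℝ) (k : ℕ) :
    Tendsto (fun s : ℝ => ((lagP k (ε*(s^2/2)+c) (ε*(s*x+s^2/2)) / s^k : ℝ):ℂ)) atTop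
      (𝓝 (ω^k * hermC k (ω*x))) := by
  have hinv : ∀ r : ℝ, Tendsto (fun s : ℝ => r / s) atTop (𝓝 0) :=
    fun r => tendsto_const_nhds.div_atTop tendsto_id
  induction k using Nat.twoStepInduction with
  | zero => simp [lagP, hermC]
  | one =>
    have h : Tendsto (fun s : ℝ => ((ε * x - (c+1)/s : ℝ) : ℂ)) atTop (𝓝 ((ε * x - 0 : ℝ):ℂ)) :=
      (Complex.continuous_ofReal.tendsto _).comp (tendsto_const_nhds.sub (hinv _))
    have e : ω^1 * hermC 1 (ω*x) = ((ε * x - 0 : ℝ):ℂ) := by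
      simp [hermC, ← hω]
      ring
    rw [e]
    refine h.congr' ?_
    filter_upwards [eventually_gt_atTop 0] with s hs
    congr 1
    simp [lagP, Finset.sum_range_succ]
    field_simp
    ring
  | more k h0 h1 =>
    have e : ω^(k+2) * hermC (k+2) (ω*x) =
        ((ε * x - 0 : ℝ):ℂ) * (ω^(k+1) * hermC (k+1) (ω*x))
        - (((k+1) * (0 * 0 + ε/2) : ℝ) : ℂ) * (ω^k * hermC k (ω*x)) := by
      rw [hermC_rec]
      push_cast
      rw [← hω]
      ring
    rw [e]
    have hA : Tendsto (fun s : ℝ => ((ε * x - (2*k+3+c)/s : ℝ) : ℂ)) atTop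
        (𝓝 ((ε * x - 0 : ℝ):ℂ)) :=
      (Complex.continuous_ofReal.tendsto _).comp (tendsto_const_nhds.sub (hinv _))
    have hB : Tendsto (fun s : ℝ => (((k+1) * ((k+1+c)/s * (1/s) + ε/2) : ℝ) : ℂ)) atTop
        (𝓝 (((k+1) * (0 * 0 + ε/2) : ℝ) : ℂ)) :=
      (Complex.continuous_ofReal.tendsto _).comp
        (tendsto_const_nhds.mul (((hinv _).mul (hinv _)).add tendsto_const_nhds))
    refine ((hA.mul h1).sub (hB.mul h0)).congr' ?_
    filter_upwards [eventually_gt_atTop 0] with s hs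
    rw [lagP_rec, ← Complex.ofReal_mul, ← Complex.ofReal_mul, ← Complex.ofReal_sub]
    congr 1
    generalize lagP (k+1) _ _ = P
    generalize lagP k _ _ = Q
    field_simp
    ring

theorem stmt4 (m n : ℕ) (hm : Even m) (hn : m + 1 ≤ n) (x : ℝ) :
    Filter.Tendsto
      (fun α : ℝ =>
        (((2 * α) ^ (-(n : ℝ) / 2) * lagIII m n α (Real.sqrt (2 * α) * x + α) : ℝ) : ℂ))
      Filter.atTop (nhds (hermIII m n x)) := by
  have hs : Tendsto (fun α : ℝ => Real.sqrt (2 * α)) atTop atTop :=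
    Real.tendsto_sqrt_atTop.comp (tendsto_id.const_mul_atTop (by norm_num))
  obtain ⟨p, rfl⟩ : ∃ p, n = m + (p + 1) := ⟨n - m - 1, by omega⟩
  have key : Tendsto (fun s : ℝ =>
      ((lagIII m (m + (p+1)) (s^2/2) (s*x+s^2/2) / s^(m+(p+1)) : ℝ) : ℂ)) atTop
      (𝓝 (hermIII m (m + (p+1)) x)) := by
    have hI : Complex.I ^ 2 = ((-1 : ℝ) : ℂ) := by simp
    have h1 : (1:ℂ) ^ 2 = ((1 : ℝ) : ℂ) := by simp
    have a1 := lag_lim (-1) Complex.I hI 0 x m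
    have a2 := lag_lim 1 1 h1 (-1) x (p+1)
    have a3 := lag_lim (-1) Complex.I hI 1 x (m-1)
    have a4 := lag_lim 1 1 h1 0 x p
    have a5 : Tendsto (fun s : ℝ => ((m * (x / s + 1/2) : ℝ) : ℂ)) atTop
        (𝓝 ((m * (0 + 1/2) : ℝ) : ℂ)) :=
      (Complex.continuous_ofReal.tendsto _).comp (tendsto_const_nhds.mul
        ((tendsto_const_nhds.div_atTop tendsto_id).add tendsto_const_nhds))
    have a := (a1.mul a2).sub ((a5.mul a3).mul a4)
    have e : hermIII m (m + (p+1)) x = Complex.I ^ m * hermC m (Complex.I * x) *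
        (1 ^ (p+1) * hermC (p+1) (1 * x)) - ((m * (0 + 1/2) : ℝ) : ℂ) *
        (Complex.I ^ (m-1) * hermC (m-1) (Complex.I * x)) * (1 ^ p * hermC p (1 * x)) := by
      rw [hermIII, if_neg (by omega), show m + (p+1) - m = p + 1 by omega,
        show p + 1 - 1 = p by omega]
      rcases m with _ | q
      · simp
      · simp only [Nat.add_sub_cancel, one_pow, one_mul, pow_succ]
        push_cast
        linear_combination (Complex.I ^ q * ((q:ℂ)+1) / 2 * hermC q (Complex.I * x) *
          hermC p x) * Complex.I_sq
    rw [e]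
    refine a.congr' ?_
    filter_upwards [eventually_gt_atTop 0] with s hs
    rw [lagIII, if_neg (by omega), show m + (p+1) - m = p + 1 by omega,
        show p + 1 - 1 = p by omega, hm.neg_one_pow]
    simp only [← Complex.ofReal_mul, ← Complex.ofReal_sub]
    congr 1
    rw [show (-1) * (s^2/2) + 0 = -(s^2/2) by ring, show (-1) * (s*x+s^2/2) = -(s*x+s^2/2) by ring,
      show 1 * (s^2/2) + -1 = s^2/2 - 1 by ring, show 1 * (s*x+s^2/2) = (s*x+s^2/2) by ring,
      show (-1) * (s^2/2) + 1 = -(s^2/2) + 1 by ring, show 1 * (s^2/2) + 0 = s^2/2 by ring]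
    generalize lagP m _ _ = A
    generalize lagP (p+1) _ _ = B
    generalize lagP (m-1) _ _ = C
    generalize lagP p _ _ = D
    rcases m with _ | q
    · simp
      field_simp
    · simp only [Nat.add_sub_cancel]
      field_simp
      ring
  refine (key.comp hs).congr' ?_
  filter_upwards [eventually_gt_atTop 0] with α hα
  have hα2 : 0 ≤ 2 * α := by positivity
  simp only [Function.comp]
  congr 1
  rw [Real.sq_sqrt hα2, show 2 * α / 2 = α by ring, div_eq_mul_inv, mul_comm]
  congr 1
  rw [Real.sqrt_eq_rpow, ← Real.rpow_natCast, ← Real.rpow_mul hα2, ← Real.rpow_neg hα2]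
  congr 1
  ring
end

section
/- Let m ∈ ℕ with m ≥ 1 and let n = 0 or n ≥ m+1. Then for every x ∈ ℝ, Ĥ^{(III,2m)}_{2n}(x) = L̂^{(III,m)}_n(x²; 1/2); that is, the even type III X_{2m}-Hermite exceptional orthogonal polynomials are obtained from the type III X_m-Laguerre ones with parameter α = 1/2 by the quadratic substitution x ↦ x². -/
open Finset Filter Topology

lemma prodE (j d : ℕ) : (∏ i ∈ Finset.Icc (j + 1) (j + d), (-(1/2) + (i : ℝ))) *
    ((j + d).factorial * (2 * j).factorial * 4 ^ d) = (2 * (j + d)).factorial * j.factorial := by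
  induction d with
  | zero => simp [mul_comm]
  | succ d ih =>
    rw [← add_assoc, Finset.prod_Icc_succ_top (by omega), show 2 * (j + d + 1) = 2 * (j + d) + 1 + 1 by ring,
      Nat.factorial_succ, Nat.factorial_succ (2 * (j + d) + 1), Nat.factorial_succ (2 * (j + d))]
    push_cast at ih ⊢
    linear_combination (2 * ((j:ℝ) + d) + 1) * (2 * ((j:ℝ) + d) + 2) * ih

lemma prodO (j d : ℕ) : (∏ i ∈ Finset.Icc (j + 1) (j + d), (1/2 + (i : ℝ))) *
    ((j + d).factorial * (2 * j + 1).factorial * 4 ^ d)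
      = (2 * (j + d) + 1).factorial * j.factorial := by
  induction d with
  | zero => simp [mul_comm]
  | succ d ih =>
    rw [← add_assoc, Finset.prod_Icc_succ_top (by omega), show 2 * (j + d + 1) + 1 = 2 * (j + d) + 1 + 1 + 1 by ring,
      Nat.factorial_succ, Nat.factorial_succ (2 * (j + d) + 1 + 1), Nat.factorial_succ (2 * (j + d) + 1)]
    push_cast at ih ⊢
    linear_combination (2 * ((j:ℝ) + d) + 3) * (2 * ((j:ℝ) + d) + 2) * ih

lemma hermE (n : ℕ) (z : ℂ) (y : ℝ) (h : z ^ 2 = y) :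
    hermC (2 * n) z = ((lagP n (-(1/2)) y : ℝ) : ℂ) := by
  unfold hermC lagP
  rw [show 2 * n / 2 + 1 = n + 1 by omega, ← Finset.sum_range_reflect, Complex.ofReal_sum]
  refine Finset.sum_congr rfl fun j hj => ?_
  obtain ⟨d, rfl⟩ := Nat.exists_eq_add_of_le (Nat.lt_succ_iff.mp (Finset.mem_range.mp hj))
  rw [show j + d + 1 - 1 - j = d by omega, show 2 * (j + d) - 2 * d = 2 * j by omega,
    show j + d - j = d by omega, pow_mul, h]
  have e := prodE j d
  have h1 : ((j + d).factorial : ℝ) ≠ 0 := by positivity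
  have h2 : ((2 * j).factorial : ℝ) ≠ 0 := by positivity
  have h3 : (j.factorial : ℝ) ≠ 0 := by positivity
  have h4 : (d.factorial : ℝ) ≠ 0 := by positivity
  have key : ((2 * (j + d)).factorial : ℝ) / (d.factorial * (2 * j).factorial * 4 ^ d)
      = (j + d).factorial / j.factorial *
        ((∏ i ∈ Finset.Icc (j + 1) (j + d), (-(1/2) + (i : ℝ))) / d.factorial) := by
    generalize (∏ i ∈ Finset.Icc (j + 1) (j + d), (-(1/2) + (i : ℝ))) = P at *
    rw [div_mul_div_comm, div_eq_div_iff (by positivity) (by positivity)]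
    linear_combination (-(d.factorial : ℝ)) * e
  rw [mul_assoc ((-1 : ℝ) ^ d), ← key]
  push_cast
  ring

lemma hermO (n : ℕ) (z : ℂ) (y : ℝ) (h : z ^ 2 = y) :
    hermC (2 * n + 1) z = z * ((lagP n (1/2) y : ℝ) : ℂ) := by
  unfold hermC lagP
  rw [show (2 * n + 1) / 2 + 1 = n + 1 by omega, ← Finset.sum_range_reflect, Complex.ofReal_sum,
    Finset.mul_sum]
  refine Finset.sum_congr rfl fun j hj => ?_
  obtain ⟨d, rfl⟩ := Nat.exists_eq_add_of_le (Nat.lt_succ_iff.mp (Finset.mem_range.mp hj))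
  rw [show j + d + 1 - 1 - j = d by omega, show 2 * (j + d) + 1 - 2 * d = 2 * j + 1 by omega,
    show j + d - j = d by omega, pow_succ, pow_mul, h]
  have e := prodO j d
  have key : ((2 * (j + d) + 1).factorial : ℝ) / (d.factorial * (2 * j + 1).factorial * 4 ^ d)
      = (j + d).factorial / j.factorial *
        ((∏ i ∈ Finset.Icc (j + 1) (j + d), (1/2 + (i : ℝ))) / d.factorial) := by
    generalize (∏ i ∈ Finset.Icc (j + 1) (j + d), (1/2 + (i : ℝ))) = P at *
    rw [div_mul_div_comm, div_eq_div_iff (by positivity) (by positivity)]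
    linear_combination (-(d.factorial : ℝ)) * e
  rw [mul_assoc ((-1 : ℝ) ^ d), ← key]
  push_cast
  ring

theorem stmt5 (m n : ℕ) (hm : 1 ≤ m) (hn : n = 0 ∨ m + 1 ≤ n) (x : ℝ) :
    hermIII (2 * m) (2 * n) x = ((lagIII m n (1 / 2) (x ^ 2) : ℝ) : ℂ) := by
  rcases hn with rfl | hn
  · simp [hermIII, lagIII]
  obtain ⟨p, rfl⟩ : ∃ p, m = p + 1 := ⟨m - 1, by omega⟩
  obtain ⟨q, rfl⟩ := Nat.exists_eq_add_of_le hn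
  have hx : (x : ℂ) ^ 2 = ((x ^ 2 : ℝ) : ℂ) := by push_cast; rfl
  have hi : (Complex.I * x) ^ 2 = ((-x ^ 2 : ℝ) : ℂ) := by
    rw [mul_pow, Complex.I_sq]; push_cast; ring
  unfold hermIII lagIII
  rw [if_neg (by omega), if_neg (by omega),
    show 2 * (p + 1 + 1 + q) - 2 * (p + 1) - 1 = 2 * q + 1 by omega,
    show 2 * (p + 1 + 1 + q) - 2 * (p + 1) = 2 * (q + 1) by omega,
    show 2 * (p + 1) - 1 = 2 * p + 1 by omega,
    show p + 1 + 1 + q - (p + 1) - 1 = q by omega,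
    show p + 1 + 1 + q - (p + 1) = q + 1 by omega,
    show p + 1 - 1 = p by omega,
    show (1 / 2 - 1 : ℝ) = -(1/2) by norm_num, show (-(1 / 2) + 1 : ℝ) = 1/2 by norm_num,
    hermE _ _ _ hx, hermE _ _ _ hi, hermO _ _ _ hx, hermO _ _ _ hi, pow_mul, Complex.I_sq]
  push_cast
  linear_combination ((-1 : ℂ) ^ (p + 1) * (p + 1) * x ^ 2 * (lagP p (1/2) (-x ^ 2) : ℝ)
    * (lagP q (1/2) (x ^ 2) : ℝ)) * Complex.I_sq
end

section
/- For every integer m ≥ 1 and every x ∈ ℝ, Ĥ^{(III,2m)}_{2m+1}(x) = x · L̂^{(III,m−1)}_m(x²; −3/2). -/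
open Finset Filter Topology

noncomputable def gg (k : ℕ) : ℝ := ∏ i ∈ Finset.range k, ((i : ℝ) + 1 / 2)

lemma gg_succ (k : ℕ) : gg (k + 1) = gg k * ((k : ℝ) + 1 / 2) := by
  simp [gg, Finset.prod_range_succ]

lemma gg_pos (k : ℕ) : 0 < gg k := by
  unfold gg
  exact Finset.prod_pos fun i _ => by positivity

lemma gg_fact (j : ℕ) : ((2 * j).factorial : ℝ) = 4 ^ j * j.factorial * gg j := by
  induction j with
  | zero => simp [gg]
  | succ j ih =>
    rw [show 2 * (j + 1) = 2 * j + 1 + 1 by ring, Nat.factorial_succ, Nat.factorial_succ,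
      Nat.factorial_succ, gg_succ]
    push_cast
    rw [ih]
    ring

lemma gg_fact' (j : ℕ) : ((2 * j + 1).factorial : ℝ) = 2 * 4 ^ j * j.factorial * gg (j + 1) := by
  rw [Nat.factorial_succ, gg_succ]
  push_cast
  rw [gg_fact]
  ring

lemma gg_prod (s k j : ℕ) : (∏ i ∈ Finset.Icc (k + 1) (k + j), ((s : ℝ) - 1 / 2 + (i : ℝ)))
    = gg (k + j + s) / gg (k + s) := by
  induction j with
  | zero => simp [(gg_pos (k + s)).ne']
  | succ j ih =>
    rw [← add_assoc, Finset.prod_Icc_succ_top (by omega), ih,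
      show k + j + 1 + s = k + j + s + 1 by ring, gg_succ]
    push_cast
    ring

lemma lagP_half (s n : ℕ) (α : ℝ) (hα : α = (s : ℝ) - 1 / 2) (y : ℝ) :
    (-1) ^ n * lagP n α (-y) = ∑ k ∈ Finset.range (n + 1),
      (n.choose k : ℝ) * (gg (n + s) / gg (k + s)) * y ^ k := by
  subst hα
  rw [lagP, Finset.mul_sum]
  refine Finset.sum_congr rfl fun k hk => ?_
  obtain ⟨j, rfl⟩ := Nat.exists_eq_add_of_le (Nat.lt_succ_iff.mp (Finset.mem_range.mp hk))
  rw [gg_prod, Nat.cast_add_choose, neg_pow y, Nat.add_sub_cancel_left]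
  have h : ((-1 : ℝ) ^ (k + j)) * (-1) ^ j * (-1) ^ k = 1 := by
    rw [pow_add, show (-1 : ℝ) ^ k * (-1) ^ j * (-1) ^ j * (-1) ^ k
      = ((-1) * (-1)) ^ k * ((-1) * (-1)) ^ j by rw [mul_pow, mul_pow]; ring]
    simp
  linear_combination (((k + j).factorial : ℝ) / k.factorial * (gg (k + j + s) / gg (k + s) /
    j.factorial) * y ^ k) * h

lemma herm_even (m : ℕ) (x : ℝ) :
    Complex.I ^ (2 * m) * hermC (2 * m) (Complex.I * x) =
      ((∑ k ∈ Finset.range (m + 1), (m.choose k : ℝ) * (gg m / gg k) * (x ^ 2) ^ k : ℝ) : ℂ) := by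
  rw [← Finset.sum_flip, hermC, Finset.mul_sum, Nat.mul_div_cancel_left _ (by norm_num),
    Complex.ofReal_sum]
  refine Finset.sum_congr rfl fun k hk => ?_
  obtain ⟨j, rfl⟩ := Nat.exists_eq_add_of_le (Nat.lt_succ_iff.mp (Finset.mem_range.mp hk))
  rw [Nat.add_sub_cancel_left, show 2 * (k + j) - 2 * k = 2 * j by omega,
    Nat.choose_symm_add.symm, Nat.cast_add_choose]
  have h : ((-1 : ℂ) ^ (k + j)) * (-1) ^ k * (-1) ^ j = 1 := by
    rw [pow_add, show (-1 : ℂ) ^ k * (-1) ^ j * (-1) ^ k * (-1) ^ j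
      = ((-1) * (-1)) ^ k * ((-1) * (-1)) ^ j by rw [mul_pow, mul_pow]; ring]
    simp
  have e : (((2 * (k + j)).factorial : ℝ) / (k.factorial * (2 * j).factorial * 4 ^ k))
      = (k + j).factorial / (k.factorial * j.factorial) * (gg (k + j) / gg j) := by
    rw [gg_fact, gg_fact]
    have := (gg_pos j).ne'
    field_simp
    ring
  rw [← e, pow_mul, pow_mul, mul_pow, Complex.I_sq]
  push_cast
  rw [mul_pow]
  linear_combination ((((2 * (k + j)).factorial : ℂ) /
    (k.factorial * (2 * j).factorial * 4 ^ k)) * ((x : ℂ) ^ 2) ^ j) * h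

lemma herm_odd (p : ℕ) (x : ℝ) :
    Complex.I ^ (2 * (p + 1)) * (Complex.I * ((p : ℂ) + 1) * hermC (2 * p + 1) (Complex.I * x)) =
      ((x * ∑ k ∈ Finset.range (p + 1), ((p : ℝ) + 1) * (p.choose k : ℝ) *
        (gg (p + 1) / gg (k + 1)) * (x ^ 2) ^ k : ℝ) : ℂ) := by
  rw [← Finset.sum_flip, hermC, Finset.mul_sum, Finset.mul_sum, Finset.mul_sum,
    show (2 * p + 1) / 2 = p by omega, Complex.ofReal_sum]
  refine Finset.sum_congr rfl fun k hk => ?_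
  obtain ⟨j, rfl⟩ := Nat.exists_eq_add_of_le (Nat.lt_succ_iff.mp (Finset.mem_range.mp hk))
  rw [Nat.add_sub_cancel_left, show 2 * (k + j) + 1 - 2 * k = 2 * j + 1 by omega,
    Nat.choose_symm_add.symm, Nat.cast_add_choose]
  have h : ((-1 : ℂ) ^ (k + j)) * (-1) ^ k * (-1) ^ j = 1 := by
    rw [pow_add, show (-1 : ℂ) ^ k * (-1) ^ j * (-1) ^ k * (-1) ^ j
      = ((-1) * (-1)) ^ k * ((-1) * (-1)) ^ j by rw [mul_pow, mul_pow]; ring]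
    simp
  have e : (((2 * (k + j) + 1).factorial : ℝ) / (k.factorial * (2 * j + 1).factorial * 4 ^ k))
      = (k + j).factorial / (k.factorial * j.factorial) * (gg (k + j + 1) / gg (j + 1)) := by
    rw [gg_fact', gg_fact']
    have := (gg_pos (j + 1)).ne'
    field_simp
    ring
  rw [mul_assoc (((k + j : ℕ) : ℝ) + 1), ← e, pow_mul, pow_succ _ (2 * j), pow_mul, mul_pow,
    Complex.I_sq, pow_succ]
  push_cast
  rw [mul_pow]
  have hI := Complex.I_sq
  generalize hF : (((2 * (k + j) + 1).factorial : ℂ) /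
    (k.factorial * (2 * j + 1).factorial * 4 ^ k)) = F
  linear_combination (((k : ℂ) + j + 1) * F * ((x : ℂ) ^ 2) ^ j * x) * h
    - ((-1 : ℂ) ^ (k + j) * (-1) ^ k * (-1) ^ j * ((k : ℂ) + j + 1) * F * ((x : ℂ) ^ 2) ^ j * x) * hI

lemma lag_der (p : ℕ) (y : ℝ) :
    (-1) ^ p * (-((p : ℝ) * y * lagP (p - 1) (5 / 2) (-y))) = ∑ k ∈ Finset.range (p + 1),
      (k : ℝ) * ((p.choose k : ℝ) * (gg (p + 2) / gg (k + 2)) * y ^ k) := by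
  cases p with
  | zero => simp
  | succ q =>
    rw [Finset.sum_range_succ', Nat.add_sub_cancel]
    have := lagP_half 3 q (5 / 2) (by norm_num) y
    rw [show (-1 : ℝ) ^ (q + 1) * (-(((q + 1 : ℕ) : ℝ) * y * lagP q (5 / 2) (-y)))
      = ((q + 1 : ℕ) : ℝ) * y * ((-1) ^ q * lagP q (5 / 2) (-y)) by ring, this, Finset.mul_sum]
    simp only [Nat.cast_zero, zero_mul, add_zero]
    refine Finset.sum_congr rfl fun k _ => ?_
    have h : ((q : ℝ) + 1) * (q.choose k : ℝ) = ((q + 1).choose (k + 1) : ℝ) * ((k : ℝ) + 1) := by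
      exact_mod_cast Nat.add_one_mul_choose_eq q k
    rw [show q + 1 + 2 = q + 3 by ring, show k + 1 + 2 = k + 3 by ring]
    push_cast
    linear_combination (gg (q + 3) / gg (k + 3) * y ^ k * y) * h

lemma key (p : ℕ) (y : ℝ) :
    (∑ k ∈ Finset.range (p + 1 + 1), ((p + 1).choose k : ℝ) * (gg (p + 1) / gg k) * y ^ k)
      + ∑ k ∈ Finset.range (p + 1), ((p : ℝ) + 1) * (p.choose k : ℝ) *
        (gg (p + 1) / gg (k + 1)) * y ^ k
    = (∑ k ∈ Finset.range (p + 1), (p.choose k : ℝ) * (gg (p + 2) / gg (k + 2)) * y ^ k)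
        * (y + 3 / 2)
      + ∑ k ∈ Finset.range (p + 1),
        (k : ℝ) * ((p.choose k : ℝ) * (gg (p + 2) / gg (k + 2)) * y ^ k) := by
  have h1 : (∑ k ∈ Finset.range (p + 1 + 1), ((p + 1).choose k : ℝ) * (gg (p + 1) / gg k) * y ^ k)
      + ∑ k ∈ Finset.range (p + 1), ((p : ℝ) + 1) * (p.choose k : ℝ) *
        (gg (p + 1) / gg (k + 1)) * y ^ k
      = ∑ k ∈ Finset.range (p + 1 + 1), ((p + 1).choose k : ℝ) * (gg (p + 2) / gg (k + 1)) * y ^ k := by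
    have : ∑ k ∈ Finset.range (p + 1), ((p : ℝ) + 1) * (p.choose k : ℝ) *
        (gg (p + 1) / gg (k + 1)) * y ^ k = ∑ k ∈ Finset.range (p + 1 + 1),
        ((p : ℝ) + 1) * (p.choose k : ℝ) * (gg (p + 1) / gg (k + 1)) * y ^ k := by
      rw [Finset.sum_range_succ _ (p + 1)]
      simp
    rw [this, ← Finset.sum_add_distrib]
    refine Finset.sum_congr rfl fun k hk => ?_
    have hk' : k ≤ p + 1 := Nat.lt_succ_iff.mp (Finset.mem_range.mp hk)
    have h : ((p : ℝ) + 1) * (p.choose k : ℝ) = ((p + 1).choose k : ℝ) * ((p : ℝ) + 1 - k) := by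
      have := Nat.choose_mul_succ_eq p k
      rw [← Nat.cast_inj (R := ℝ)] at this
      push_cast [Nat.cast_sub hk'] at this
      linarith
    rw [h, gg_succ (p + 1), gg_succ k]
    have := (gg_pos k).ne'
    have : (k : ℝ) + 1 / 2 ≠ 0 := by positivity
    field_simp
    push_cast
    ring
  have h2 : ∑ k ∈ Finset.range (p + 1 + 1), (p.choose k : ℝ) * (gg (p + 2) / gg (k + 1)) * y ^ k
      = ∑ k ∈ Finset.range (p + 1), (p.choose k : ℝ) * (gg (p + 2) / gg (k + 1)) * y ^ k := by
    rw [Finset.sum_range_succ _ (p + 1)]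
    simp
  have h3 : ∑ k ∈ Finset.range (p + 1 + 1), ((p + 1).choose k : ℝ) * (gg (p + 2) / gg (k + 1)) * y ^ k
      = ∑ k ∈ Finset.range (p + 1), (p.choose k : ℝ) * (gg (p + 2) / gg (k + 2)) * y ^ (k + 1)
      + ∑ k ∈ Finset.range (p + 1), (p.choose k : ℝ) * (gg (p + 2) / gg (k + 1)) * y ^ k := by
    rw [← h2, Finset.sum_range_succ', Finset.sum_range_succ' _ (p + 1), ← add_assoc,
      ← Finset.sum_add_distrib]
    congr 1
    · refine Finset.sum_congr rfl fun k _ => ?_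
      rw [Nat.choose_succ_succ]
      push_cast
      ring
    · simp
  rw [h1, h3, Finset.sum_mul, ← Finset.sum_add_distrib, ← Finset.sum_add_distrib]
  refine Finset.sum_congr rfl fun k _ => ?_
  rw [gg_succ (k + 1)]
  have := (gg_pos (k + 1)).ne'
  have : ((k + 1 : ℕ) : ℝ) + 1 / 2 ≠ 0 := by positivity
  push_cast at *
  field_simp
  ring

theorem stmt6 (m : ℕ) (hm : 1 ≤ m) (x : ℝ) :
    hermIII (2 * m) (2 * m + 1) x = ((x * lagIII (m - 1) m (-3 / 2) (x ^ 2) : ℝ) : ℂ) := by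
  obtain ⟨p, rfl⟩ : ∃ p, m = p + 1 := ⟨m - 1, by omega⟩
  have hL : lagIII (p + 1 - 1) (p + 1) (-3 / 2) (x ^ 2)
      = ((-1) ^ p * lagP p (3 / 2) (-x ^ 2)) * (x ^ 2 + 3 / 2)
        + (-1) ^ p * (-((p : ℝ) * x ^ 2 * lagP (p - 1) (5 / 2) (-x ^ 2))) := by
    have e1 : lagP 1 (-3 / 2 - 1) (x ^ 2) = x ^ 2 + 3 / 2 := by
      norm_num [lagP, Finset.sum_range_succ]
      ring
    have e0 : lagP 0 (-3 / 2) (x ^ 2) = 1 := by simp [lagP]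
    rw [lagIII, if_neg (by omega), Nat.add_sub_cancel, Nat.add_sub_cancel_left, e1,
      Nat.sub_self, e0, show -(-3 / 2 : ℝ) = 3 / 2 by norm_num,
      show (3 / 2 + 1 : ℝ) = 5 / 2 by norm_num]
    ring
  have hH : hermIII (2 * (p + 1)) (2 * (p + 1) + 1) x
      = (Complex.I ^ (2 * (p + 1)) * hermC (2 * (p + 1)) (Complex.I * x)) * x
        + Complex.I ^ (2 * (p + 1)) *
          (Complex.I * ((p : ℂ) + 1) * hermC (2 * p + 1) (Complex.I * x)) := by
    have e1 : hermC 1 (x : ℂ) = x := by simp [hermC]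
    have e0 : hermC 0 (x : ℂ) = 1 := by simp [hermC]
    rw [hermIII, if_neg (by omega), Nat.add_sub_cancel_left, e1, Nat.sub_self, e0,
      show 2 * (p + 1) - 1 = 2 * p + 1 by omega]
    push_cast
    ring
  rw [hH, hL, herm_even, herm_odd, lagP_half 2 p (3 / 2) (by norm_num), lag_der, ← key]
  push_cast
  ring
end

section
/- For every integer m ≥ 1 and every x ∈ ℝ, Ĥ^{(III,2m)}_{2m+1}(x) = (−1)^m x L_m^{(1/2)}(−x²); equivalently, Ĥ^{(III,2m)}_{2m+1}(x) = (−1)^{m+1} i H_{2m+1}(ix), where H_{2m+1}(ix) is the monic Hermite polynomial evaluated at ix in ℂ. -/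
open Finset Filter Topology

theorem herm_rec_aux (p : ℕ) (z : ℂ) :
    hermC (2 * (p + 1) + 1) z
      = z * hermC (2 * (p + 1)) z - ((p : ℂ) + 1) * hermC (2 * (p + 1) - 1) z := by
  have e1 : (2 * (p + 1) + 1) / 2 + 1 = (p + 1) + 1 := by omega
  have e2 : (2 * (p + 1)) / 2 + 1 = (p + 1) + 1 := by omega
  have e3 : (2 * (p + 1) - 1) / 2 + 1 = p + 1 := by omega
  unfold hermC
  rw [e1, e2, e3, Finset.sum_range_succ', Finset.sum_range_succ' _ (p + 1), mul_add z, Finset.mul_sum,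
    Finset.mul_sum, add_sub_right_comm, ← Finset.sum_sub_distrib]
  congr 1
  · apply Finset.sum_congr rfl
    intro k hk
    obtain ⟨j, rfl⟩ : ∃ j, p = k + j := ⟨p - k, by have := Finset.mem_range.1 hk; omega⟩
    have a1 : 2 * (k + j + 1) + 1 - 2 * (k + 1) = 2 * j + 1 := by omega
    have a2 : 2 * (k + j + 1) - 2 * (k + 1) = 2 * j := by omega
    have a3 : 2 * (k + j + 1) - 1 - 2 * k = 2 * j + 1 := by omega
    have a4 : 2 * (k + j + 1) - 1 = 2 * (k + j) + 1 := by omega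
    have a5 : 2 * (k + j + 1) = 2 * (k + j) + 1 + 1 := by omega
    rw [a1, a2, a3, a4, a5]
    simp only [Nat.factorial_succ (2 * (k + j) + 1 + 1), Nat.factorial_succ (2 * (k + j) + 1),
      Nat.factorial_succ (2 * j), Nat.factorial_succ k]
    have h1 : ((k.factorial : ℕ) : ℂ) ≠ 0 := by exact_mod_cast k.factorial_ne_zero
    have h2 : (((2 * j).factorial : ℕ) : ℂ) ≠ 0 := by exact_mod_cast (2 * j).factorial_ne_zero
    have h3 : (k : ℂ) + 1 ≠ 0 := by exact_mod_cast k.succ_ne_zero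
    have h4 : 2 * (j : ℂ) + 1 ≠ 0 := by exact_mod_cast (2 * j).succ_ne_zero
    push_cast
    field_simp
    ring
  · have h1 : (((2 * (p + 1)).factorial : ℕ) : ℂ) ≠ 0 := by
      exact_mod_cast (2 * (p + 1)).factorial_ne_zero
    have h2 : (((2 * (p + 1) + 1).factorial : ℕ) : ℂ) ≠ 0 := by
      exact_mod_cast (2 * (p + 1) + 1).factorial_ne_zero
    simp only [mul_zero, Nat.sub_zero, pow_zero, Nat.factorial_zero, Nat.cast_one, one_mul, mul_one,
      div_self h1, div_self h2]
    ring

theorem prod_aux (k d : ℕ) :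
    (k + d).factorial * (∏ j ∈ Finset.Icc (k + 1) (k + d), ((1 / 2 : ℝ) + (j : ℝ)))
      * (2 * k + 1).factorial * 4 ^ d
      = (2 * (k + d) + 1).factorial * k.factorial := by
  induction d with
  | zero => simp; ring
  | succ d ih =>
    have a : 2 * (k + (d + 1)) + 1 = 2 * (k + d) + 1 + 1 + 1 := by ring
    rw [← add_assoc k d 1, Finset.prod_Icc_succ_top (by omega), add_assoc k d 1, a,
      Nat.factorial_succ (2 * (k + d) + 1 + 1), Nat.factorial_succ (2 * (k + d) + 1),
      ← add_assoc k d 1, Nat.factorial_succ (k + d)]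
    push_cast at ih ⊢
    linear_combination (2 * ((k : ℝ) + d) + 2) * (2 * ((k : ℝ) + d) + 3) * ih

theorem herm_lag_aux (m : ℕ) (x : ℝ) :
    hermC (2 * m + 1) (Complex.I * x) = Complex.I * x * ((lagP m (1 / 2) (-x ^ 2) : ℝ) : ℂ) := by
  have e1 : (2 * m + 1) / 2 + 1 = m + 1 := by omega
  unfold hermC lagP
  rw [e1, ← Finset.sum_range_reflect, Complex.ofReal_sum, Finset.mul_sum]
  apply Finset.sum_congr rfl
  intro k hk
  obtain ⟨d, rfl⟩ : ∃ d, m = k + d := ⟨m - k, by have := Finset.mem_range.1 hk; omega⟩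
  have a1 : k + d + 1 - 1 - k = d := by omega
  have a2 : k + d - k = d := by omega
  have a3 : 2 * (k + d) + 1 - 2 * d = 2 * k + 1 := by omega
  rw [a1, a2, a3]
  have hz : (Complex.I * x) ^ (2 * k + 1) = Complex.I * x * (((-x ^ 2) ^ k : ℝ) : ℂ) := by
    rw [pow_succ, pow_mul, mul_pow, Complex.I_sq]
    push_cast
    ring
  have hc : ((2 * (k + d) + 1).factorial : ℝ) / (d.factorial * (2 * k + 1).factorial * 4 ^ d)
      = ((k + d).factorial : ℝ) / k.factorial *
        ((∏ j ∈ Finset.Icc (k + 1) (k + d), ((1 / 2 : ℝ) + (j : ℝ))) / d.factorial) := by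
    have h := prod_aux k d
    have h1 : ((k.factorial : ℕ) : ℝ) ≠ 0 := by exact_mod_cast k.factorial_ne_zero
    have h2 : ((d.factorial : ℕ) : ℝ) ≠ 0 := by exact_mod_cast d.factorial_ne_zero
    have h3 : (((2 * k + 1).factorial : ℕ) : ℝ) ≠ 0 := by
      exact_mod_cast (2 * k + 1).factorial_ne_zero
    rw [div_mul_div_comm, div_eq_div_iff (by positivity) (by positivity)]
    linear_combination -(d.factorial : ℝ) * h
  have hc' := congrArg (fun t : ℝ => (t : ℂ)) hc
  rw [hz, mul_assoc ((-1 : ℝ) ^ d), ← hc]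
  push_cast
  ring

theorem stmt7 (m : ℕ) (hm : 1 ≤ m) (x : ℝ) :
    hermIII (2 * m) (2 * m + 1) x = (((-1 : ℝ) ^ m * x * lagP m (1 / 2) (-x ^ 2) : ℝ) : ℂ) ∧
      hermIII (2 * m) (2 * m + 1) x
        = (-1 : ℂ) ^ (m + 1) * Complex.I * hermC (2 * m + 1) (Complex.I * x) := by
  have key : hermIII (2 * m) (2 * m + 1) x
        = (-1 : ℂ) ^ (m + 1) * Complex.I * hermC (2 * m + 1) (Complex.I * x) := by
    obtain ⟨p, rfl⟩ : ∃ p, m = p + 1 := ⟨m - 1, by omega⟩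
    have b1 : 2 * (p + 1) + 1 - 2 * (p + 1) = 1 := by omega
    have c1 : hermC 1 (x : ℂ) = x := by simp [hermC]
    have c0 : hermC 0 (x : ℂ) = 1 := by simp [hermC]
    rw [herm_rec_aux, hermIII, if_neg (by omega), b1, Nat.sub_self, c1, c0, pow_mul, Complex.I_sq]
    push_cast
    linear_combination (-1 : ℂ) ^ (p + 1) * x * hermC (2 * (p + 1)) (Complex.I * x) * Complex.I_sq
  refine ⟨?_, key⟩
  rw [key, herm_lag_aux]
  push_cast
  linear_combination (-1 : ℂ) ^ (m + 1) * x * ((lagP m (1 / 2) (-x ^ 2) : ℝ) : ℂ) * Complex.I_sq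
end

section
/- Let m ≥ 1 and n ≥ m be integers. Then for every x ∈ ℝ, Ĥ^{(III,2m)}_{2n+1}(x) = (−1)^m x [L_m^{(−1/2)}(−x²) L_{n−m}^{(1/2)}(x²) − m L_{m−1}^{(1/2)}(−x²) L_{n−m}^{(−1/2)}(x²)]. -/
open Finset Filter Topology

lemma prod_even (k d : ℕ) :
    ((2 * (k + d)).factorial : ℝ) * k.factorial =
      (k + d).factorial * (2 * k).factorial * 4 ^ d *
        ∏ j ∈ Finset.Icc (k + 1) (k + d), ((-1 / 2 : ℝ) + (j : ℝ)) := by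
  induction d with
  | zero => simp; ring
  | succ d ih =>
    rw [← add_assoc, Finset.prod_Icc_succ_top (by omega),
      show 2 * (k + d + 1) = 2 * (k + d) + 1 + 1 by ring]
    simp only [Nat.factorial_succ]
    push_cast
    linear_combination (2 * ((k:ℝ) + d) + 2) * (2 * (k + d) + 1) * ih

lemma prod_odd (k d : ℕ) :
    ((2 * (k + d) + 1).factorial : ℝ) * k.factorial =
      (k + d).factorial * (2 * k + 1).factorial * 4 ^ d *
        ∏ j ∈ Finset.Icc (k + 1) (k + d), ((1 / 2 : ℝ) + (j : ℝ)) := by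
  induction d with
  | zero => simp; ring
  | succ d ih =>
    rw [← add_assoc, Finset.prod_Icc_succ_top (by omega),
      show 2 * (k + d + 1) + 1 = 2 * (k + d) + 1 + 1 + 1 by ring]
    rw [Nat.factorial_succ (2 * (k + d) + 1 + 1), Nat.factorial_succ (2 * (k + d) + 1),
      Nat.factorial_succ (k + d)]
    push_cast
    linear_combination (2 * ((k:ℝ) + d) + 3) * (2 * (k + d) + 2) * ih

lemma herm_even_s8 (n : ℕ) (z : ℂ) (y : ℝ) (h : z ^ 2 = (y : ℂ)) :
    hermC (2 * n) z = (lagP n (-1 / 2) y : ℂ) := by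
  unfold hermC lagP
  rw [show 2 * n / 2 + 1 = n + 1 by omega, ← Finset.sum_range_reflect, Complex.ofReal_sum]
  refine Finset.sum_congr rfl fun k hk => ?_
  obtain ⟨d, rfl⟩ : ∃ d, n = k + d := ⟨n - k, by have := Finset.mem_range.1 hk; omega⟩
  rw [show k + d + 1 - 1 - k = d by omega, show 2 * (k + d) - 2 * d = 2 * k by omega,
    show k + d - k = d by omega, pow_mul, h]
  have e : ((2 * (k + d)).factorial : ℝ) / (d.factorial * (2 * k).factorial * 4 ^ d) =
      ((k + d).factorial : ℝ) / k.factorial *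
      ((∏ j ∈ Finset.Icc (k + 1) (k + d), ((-1 / 2 : ℝ) + (j : ℝ))) / d.factorial) := by
    have := prod_even k d
    have h1 := Nat.factorial_ne_zero k
    have h2 := Nat.factorial_ne_zero d
    have h3 := Nat.factorial_ne_zero (2 * k)
    rw [div_mul_div_comm, div_eq_div_iff (by positivity) (by positivity)]
    linear_combination (d.factorial : ℝ) * this
  rw [mul_assoc ((-1 : ℝ) ^ d), ← e]
  push_cast
  rfl

lemma herm_odd_s8 (n : ℕ) (z : ℂ) (y : ℝ) (h : z ^ 2 = (y : ℂ)) :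
    hermC (2 * n + 1) z = z * (lagP n (1 / 2) y : ℂ) := by
  unfold hermC lagP
  rw [show (2 * n + 1) / 2 + 1 = n + 1 by omega, ← Finset.sum_range_reflect, Complex.ofReal_sum,
    Finset.mul_sum]
  refine Finset.sum_congr rfl fun k hk => ?_
  obtain ⟨d, rfl⟩ : ∃ d, n = k + d := ⟨n - k, by have := Finset.mem_range.1 hk; omega⟩
  rw [show k + d + 1 - 1 - k = d by omega, show 2 * (k + d) + 1 - 2 * d = 2 * k + 1 by omega,
    show k + d - k = d by omega, pow_succ z, pow_mul, h]
  have e : ((2 * (k + d) + 1).factorial : ℝ) / (d.factorial * (2 * k + 1).factorial * 4 ^ d) =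
      ((k + d).factorial : ℝ) / k.factorial *
      ((∏ j ∈ Finset.Icc (k + 1) (k + d), ((1 / 2 : ℝ) + (j : ℝ))) / d.factorial) := by
    have := prod_odd k d
    have h1 := Nat.factorial_ne_zero k
    have h2 := Nat.factorial_ne_zero d
    have h3 := Nat.factorial_ne_zero (2 * k + 1)
    rw [div_mul_div_comm, div_eq_div_iff (by positivity) (by positivity)]
    linear_combination (d.factorial : ℝ) * this
  rw [mul_assoc ((-1 : ℝ) ^ d), ← e]
  push_cast
  ring

theorem stmt8 (m n : ℕ) (hm : 1 ≤ m) (hn : m ≤ n) (x : ℝ) :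
    hermIII (2 * m) (2 * n + 1) x
      = (((-1 : ℝ) ^ m * x *
          (lagP m (-1 / 2) (-x ^ 2) * lagP (n - m) (1 / 2) (x ^ 2)
            - (m : ℝ) * lagP (m - 1) (1 / 2) (-x ^ 2) * lagP (n - m) (-1 / 2) (x ^ 2)) : ℝ) : ℂ) := by
  have hI : (Complex.I * (x : ℂ)) ^ 2 = ((-x ^ 2 : ℝ) : ℂ) := by
    rw [mul_pow, Complex.I_sq]; push_cast; ring
  have hx : (x : ℂ) ^ 2 = ((x ^ 2 : ℝ) : ℂ) := by push_cast; rfl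
  unfold hermIII
  rw [if_neg (by omega), show 2 * n + 1 - 2 * m = 2 * (n - m) + 1 by omega,
    show 2 * (n - m) + 1 - 1 = 2 * (n - m) by omega,
    show 2 * m - 1 = 2 * (m - 1) + 1 by omega,
    herm_even_s8 m _ _ hI, herm_odd_s8 (m - 1) _ _ hI, herm_even_s8 _ _ _ hx, herm_odd_s8 _ _ _ hx,
    pow_mul, Complex.I_sq]
  push_cast
  linear_combination (-1 : ℂ) ^ m * m * x * (lagP (m - 1) (1 / 2) (-x ^ 2) : ℂ) *
    (lagP (n - m) (-1 / 2) (x ^ 2) : ℂ) * Complex.I_sq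
end

section
/- Let m, n ∈ ℕ and α, β ∈ ℝ be such that m − n − α ≠ 0 and all occurring monic Jacobi polynomials are defined. Then for every x ∈ ℝ, P̂^{(II,m)}_n(x; α, β) = (−1)^{n+m} P̂^{(I,m)}_n(−x; β, α); in particular, types I and II X_m-Jacobi exceptional orthogonal polynomials are not independent. -/
open Finset Filter Topology

theorem jacP_reflect (n : ℕ) (α β x : ℝ) :
    jacP n β α (-x) = (-1 : ℝ) ^ n * jacP n α β x := by
  unfold jacP
  rw [← Finset.sum_range_reflect, show (n : ℝ) + β + α + 1 = n + α + β + 1 by ring,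
    mul_left_comm]
  congr 1
  rw [Finset.mul_sum]
  apply Finset.sum_congr rfl
  intro s hs
  have hs' : s ≤ n := by
    have := Finset.mem_range.mp hs
    omega
  have e1 : n + 1 - 1 - s = n - s := by omega
  have e2 : n - (n - s) = s := by omega
  rw [e1, e2, show (-x - 1) / 2 = (-1) * ((x + 1) / 2) by ring,
    show (-x + 1) / 2 = (-1) * ((x - 1) / 2) by ring, mul_pow, mul_pow]
  have e3 : (-1 : ℝ) ^ n = (-1) ^ (n - s) * (-1) ^ s := by
    rw [← pow_add]
    congr 1
    omega
  rw [e3]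
  ring

theorem stmt9 (m n : ℕ) (α β : ℝ) (h : (m : ℝ) - (n : ℝ) - α ≠ 0)
    (h1 : poch ((m : ℝ) + -α + β + 1) m ≠ 0)
    (h2 : poch (((n - 1 : ℕ) : ℝ) + (α + 1) + (β + 1) + 1) (n - 1) ≠ 0)
    (h3 : poch ((n : ℝ) + α + β + 1) n ≠ 0)
    (h4 : poch (((m - 1 : ℕ) : ℝ) + (-α + 1) + (β + 1) + 1) (m - 1) ≠ 0) (x : ℝ) :
    jacII m n α β x = (-1 : ℝ) ^ (n + m) * jacI m n β α (-x) := by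
  unfold jacII jacI
  have hd : α + (n : ℝ) - m = -((m : ℝ) - n - α) := by ring
  simp only [jacP_reflect m (-α) β x, jacP_reflect n α β x,
    jacP_reflect (n - 1) (α + 1) (β + 1) x, jacP_reflect (m - 1) (-α + 1) (β + 1) x, hd]
  have sq : ∀ k : ℕ, (-1 : ℝ) ^ k * (-1 : ℝ) ^ k = 1 := by
    intro k
    rw [← mul_pow]
    norm_num
  have hp : ∀ k : ℕ, (k : ℝ) * (-1 : ℝ) ^ (k - 1) = -((k : ℝ) * (-1 : ℝ) ^ k) := by
    intro k
    cases k with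
    | zero => simp
    | succ k =>
      rw [Nat.add_sub_cancel, pow_succ]
      ring
  rw [pow_add, one_div, one_div, inv_neg]
  have hn := hp n
  have hm := hp m
  have sn := sq n
  have sm := sq m
  generalize (-1 : ℝ) ^ (n - 1) = a' at *
  generalize (-1 : ℝ) ^ (m - 1) = b' at *
  generalize (-1 : ℝ) ^ n = a at *
  generalize (-1 : ℝ) ^ m = b at *
  generalize jacP m (-α) β x = A
  generalize jacP n α β x = B
  generalize jacP (n - 1) (α + 1) (β + 1) x = C
  generalize jacP (m - 1) (-α + 1) (β + 1) x = D
  generalize ((m : ℝ) - n - α)⁻¹ = d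
  have key : a * b * (b * A * (n * (1 + -x) * (a' * C) + α * (a * B))
      - m * (1 + -x) * (b' * D) * (a * B))
      = -(A * (n * (1 - x) * C - α * B) - m * (1 - x) * D * B) := by
    have E : a * b * (b * A * (n * (1 + -x) * (a' * C) + α * (a * B))
      - m * (1 + -x) * (b' * D) * (a * B))
      = (b * b) * A * (a * (n * a') * (1 - x) * C + α * (a * a) * B)
        - (a * a) * (b * (m * b')) * (1 - x) * D * B := by ring
    rw [E, hn, hm]
    have F : ∀ c t : ℝ, c * c = 1 → c * -(t * c) = -t := by
      intro c t hc
      linear_combination (-t) * hc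
    rw [F a _ sn, F b _ sm, sn, sm]
    ring
  linear_combination d * key
end

section
/- Let m ≥ 1 be an integer and α, β ∈ ℝ be such that the monic Jacobi polynomials P_m^{(−α−1,β−1)}, P_{m−1}^{(−α,β)} and P_m^{(−α−2,β)} are defined. Then for every x ∈ ℝ, (α+1) P_m^{(−α−1,β−1)}(x) + m(1−x) P_{m−1}^{(−α,β)}(x) = (α+1−m) P_m^{(−α−2,β)}(x). -/
open Finset Filter Topology

theorem aux_icc (a : ℝ) (s k : ℕ) : ∏ j ∈ Finset.Icc (s + 1) (s + k), (a + (j : ℝ))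
    = ∏ i ∈ Finset.range k, (a + s + k - (i : ℝ)) := by
  rw [← Finset.prod_range_reflect]
  have h : Finset.Icc (s + 1) (s + k) = Finset.Ico (s + 1) (s + k + 1) := by
    ext j; simp only [Finset.mem_Icc, Finset.mem_Ico]; omega
  rw [h, Finset.prod_Ico_eq_prod_range]
  have h2 : s + k + 1 - (s + 1) = k := by omega
  rw [h2]
  refine Finset.prod_congr rfl fun i hi => ?_
  have hi' := Finset.mem_range.1 hi
  have e : ((k - 1 - i : ℕ) : ℝ) = k - 1 - i := by
    rw [Nat.cast_sub (by omega), Nat.cast_sub (by omega)]; simp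
  rw [e]; push_cast; ring

theorem aux_shift (A : ℝ) (k : ℕ) : A * ∏ i ∈ Finset.range k, (A - 1 - (i : ℝ))
    = (∏ i ∈ Finset.range k, (A - (i : ℝ))) * (A - k) := by
  rw [← Finset.prod_range_succ (fun i : ℕ => A - (i : ℝ)) k, Finset.prod_range_succ', mul_comm]
  congr 1
  · refine Finset.prod_congr rfl fun i _ => ?_
    push_cast; ring
  · simp

theorem aux_sum (n : ℕ) (α β u v : ℝ) :
    (α + 1) * (∑ s ∈ Finset.range (n + 1 + 1),
      ((∏ j ∈ Finset.Icc (s + 1) (n + 1), (-α - 1 + (j : ℝ))) / ((n + 1 - s).factorial : ℝ)) *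
        ((∏ j ∈ Finset.Icc (n + 1 - s + 1) (n + 1), (β - 1 + (j : ℝ))) / (s.factorial : ℝ)) *
        u ^ s * v ^ (n + 1 - s))
    - (n - α + β) * u * (∑ s ∈ Finset.range (n + 1),
      ((∏ j ∈ Finset.Icc (s + 1) n, (-α + (j : ℝ))) / ((n - s).factorial : ℝ)) *
        ((∏ j ∈ Finset.Icc (n - s + 1) n, (β + (j : ℝ))) / (s.factorial : ℝ)) *
        u ^ s * v ^ (n - s))
    = (α - n) * (∑ s ∈ Finset.range (n + 1 + 1),
      ((∏ j ∈ Finset.Icc (s + 1) (n + 1), (-α - 2 + (j : ℝ))) / ((n + 1 - s).factorial : ℝ)) *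
        ((∏ j ∈ Finset.Icc (n + 1 - s + 1) (n + 1), (β + (j : ℝ))) / (s.factorial : ℝ)) *
        u ^ s * v ^ (n + 1 - s)) := by
  rw [Finset.sum_range_succ' _ (n + 1), Finset.sum_range_succ' _ (n + 1), mul_add, mul_add,
    add_sub_right_comm]
  congr 1
  · rw [Finset.mul_sum, Finset.mul_sum, Finset.mul_sum, ← Finset.sum_sub_distrib]
    refine Finset.sum_congr rfl fun t ht => ?_
    obtain ⟨k, rfl⟩ := Nat.exists_eq_add_of_le (Nat.lt_succ_iff.1 (Finset.mem_range.1 ht))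
    have e1 : t + k + 1 - (t + 1) = k := by omega
    have e2 : t + k - t = k := by omega
    have e3 : t + k + 1 = (t + 1) + k := by omega
    have e4 : t + 1 + k = k + (t + 1) := by omega
    have e5 : t + k = k + t := by omega
    rw [e1, e2, e3]
    rw [aux_icc (-α - 1) (t + 1) k, aux_icc (-α - 2) (t + 1) k, aux_icc (-α) t k]
    rw [e4, e5, aux_icc (β - 1) k (t + 1), aux_icc β k (t + 1), aux_icc β k t]
    have p1 : ∏ i ∈ Finset.range k, (-α - 1 + ((t + 1 : ℕ) : ℝ) + k - (i : ℝ))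
        = ∏ i ∈ Finset.range k, (-α + t + k - (i : ℝ)) :=
      Finset.prod_congr rfl fun i _ => by push_cast; ring
    have p2 : ∏ i ∈ Finset.range k, (-α - 2 + ((t + 1 : ℕ) : ℝ) + k - (i : ℝ))
        = ∏ i ∈ Finset.range k, ((-α + t + k) - 1 - (i : ℝ)) :=
      Finset.prod_congr rfl fun i _ => by push_cast; ring
    have p3 : ∏ i ∈ Finset.range (t + 1), (β - 1 + (k : ℝ) + ((t + 1 : ℕ) : ℝ) - (i : ℝ))
        = (∏ i ∈ Finset.range t, (β + k + t - (i : ℝ))) * (β + k) := by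
      rw [Finset.prod_range_succ]
      congr 1
      · exact Finset.prod_congr rfl fun i _ => by push_cast; ring
      · push_cast; ring
    have p4 : ∏ i ∈ Finset.range (t + 1), (β + (k : ℝ) + ((t + 1 : ℕ) : ℝ) - (i : ℝ))
        = (∏ i ∈ Finset.range t, (β + k + t - (i : ℝ))) * (β + k + t + 1) := by
      rw [Finset.prod_range_succ']
      congr 1
      · exact Finset.prod_congr rfl fun i _ => by push_cast; ring
      · push_cast; ring
    have key := aux_shift (-α + t + k) k
    rw [p1, p2, p3, p4]
    generalize (∏ i ∈ Finset.range k, (-α + t + k - (i : ℝ))) = X at *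
    generalize (∏ i ∈ Finset.range k, ((-α + t + k) - 1 - (i : ℝ))) = Z at *
    generalize (∏ i ∈ Finset.range t, (β + k + t - (i : ℝ))) = Y at *
    have f1 : (k.factorial : ℝ) ≠ 0 := by positivity
    have f2 : (t.factorial : ℝ) ≠ 0 := by positivity
    have f3 : (t : ℝ) + 1 ≠ 0 := by positivity
    rw [Nat.factorial_succ]
    push_cast
    field_simp
    linear_combination (Y * (β + k + t + 1) * v ^ k * u * u ^ t) * key
  · have i1 := aux_icc (-α - 1) 0 (n + 1)
    have i2 := aux_icc (-α - 2) 0 (n + 1)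
    simp only [Nat.zero_add] at i1 i2
    simp only [Nat.zero_add, Nat.sub_zero]
    rw [i1, i2]
    have p1 : ∏ i ∈ Finset.range (n + 1), (-α - 1 + ((0 : ℕ) : ℝ) + ((n + 1 : ℕ) : ℝ) - (i : ℝ))
        = ∏ i ∈ Finset.range (n + 1), (-α + n - (i : ℝ)) :=
      Finset.prod_congr rfl fun i _ => by push_cast; ring
    have p2 : ∏ i ∈ Finset.range (n + 1), (-α - 2 + ((0 : ℕ) : ℝ) + ((n + 1 : ℕ) : ℝ) - (i : ℝ))
        = ∏ i ∈ Finset.range (n + 1), ((-α + n) - 1 - (i : ℝ)) :=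
      Finset.prod_congr rfl fun i _ => by push_cast; ring
    have key := aux_shift (-α + n) (n + 1)
    rw [p1, p2]
    generalize (∏ i ∈ Finset.range (n + 1), (-α + n - (i : ℝ))) = X at *
    generalize (∏ i ∈ Finset.range (n + 1), ((-α + n) - 1 - (i : ℝ))) = Z at *
    have h : Finset.Icc (n + 1 + 1) (n + 1) = ∅ := by simp
    rw [h]
    push_cast at key
    simp only [Finset.prod_empty]
    linear_combination (1 / ((n + 1).factorial : ℝ) * (1 / (Nat.factorial 0 : ℝ)) * u ^ 0
      * v ^ (n + 1)) * key

theorem stmt10 (m : ℕ) (hm : 1 ≤ m) (α β : ℝ)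
    (h1 : poch ((m : ℝ) + (-α - 1) + (β - 1) + 1) m ≠ 0)
    (h2 : poch (((m - 1 : ℕ) : ℝ) + -α + β + 1) (m - 1) ≠ 0)
    (h3 : poch ((m : ℝ) + (-α - 2) + β + 1) m ≠ 0) (x : ℝ) :
    (α + 1) * jacP m (-α - 1) (β - 1) x + (m : ℝ) * (1 - x) * jacP (m - 1) (-α) β x
      = (α + 1 - (m : ℝ)) * jacP m (-α - 2) β x := by
  obtain ⟨n, rfl⟩ : ∃ n, m = n + 1 := ⟨m - 1, by omega⟩
  have hs : n + 1 - 1 = n := rfl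
  simp only [hs] at h2 ⊢
  have b1 : ((n + 1 : ℕ) : ℝ) + (-α - 1) + (β - 1) + 1 = n - α + β := by push_cast; ring
  have b2 : (n : ℝ) + -α + β + 1 = n - α + β + 1 := by ring
  have b3 : ((n + 1 : ℕ) : ℝ) + (-α - 2) + β + 1 = n - α + β := by push_cast; ring
  have hp : poch (n - α + β) (n + 1) = poch (n - α + β + 1) n * (n - α + β) := by
    unfold poch
    rw [Finset.prod_range_succ']
    congr 1
    · exact Finset.prod_congr rfl fun i _ => by push_cast; ring
    · simp
  rw [b1] at h1
  rw [b2] at h2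
  rw [hp] at h1
  have hc : (n : ℝ) - α + β ≠ 0 := right_ne_zero_of_mul h1
  have key := aux_sum n α β ((x - 1) / 2) ((x + 1) / 2)
  unfold jacP
  rw [b1, b2, b3, hp]
  generalize poch (n - α + β + 1) n = p at *
  generalize (n : ℝ) - α + β = c at *
  rw [Nat.factorial_succ]
  push_cast
  have e1 : (2 : ℝ) ^ n * (n.factorial : ℝ) / p
      = (2 ^ (n + 1) * (((n : ℝ) + 1) * (n.factorial : ℝ)) / (p * c)) * (c / (2 * (n + 1))) := by
    have : (n : ℝ) + 1 ≠ 0 := by positivity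
    field_simp
    ring
  rw [e1]
  have f3 : (n : ℝ) + 1 ≠ 0 := by positivity
  have e2 : ((n : ℝ) + 1) * (1 - x) * (c / (2 * (n + 1))) = - (c * ((x - 1) / 2)) := by
    field_simp
    ring
  generalize (2 ^ (n + 1) * (((n : ℝ) + 1) * (n.factorial : ℝ)) / (p * c)) = K at *
  generalize c / (2 * ((n : ℝ) + 1)) = d at *
  generalize (∑ s ∈ Finset.range (n + 1),
      ((∏ j ∈ Finset.Icc (s + 1) n, (-α + (j : ℝ))) / ((n - s).factorial : ℝ)) *
        ((∏ j ∈ Finset.Icc (n - s + 1) n, (β + (j : ℝ))) / (s.factorial : ℝ)) *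
        ((x - 1) / 2) ^ s * ((x + 1) / 2) ^ (n - s)) = S2 at *
  linear_combination K * key + K * S2 * e2
end
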